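/- arXiv:1902.02378 — 3 statements merged into one kernel-verified Lean document; each statement's English description precedes it below -/
import Mathlib

section
/- The intersection of any family of retracts of a free group of finite rank is a retract of that free group. -/
/-- `R` is a retract of the ambient group: there is an endomorphism with image `R`
restricting to the identity on `R` (equivalently, an idempotent endomorphism with image `R`). -/
def IsRetract {G : Type*} [Group G] (R : Subgroup G) : Prop :=
  ∃ r : G →* G, r.range = R ∧ ∀ x ∈ R, r x = x

/-- The subgroup `H` is free of rank `m`. -/
def HasFreeRank {G : Type*} [Group G] (H : Subgroup G) (m : ℕ) : Prop :=
  ∃ φ : FreeGroup (Fin m) →* G, Function.Injective φ ∧ φ.range = H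

/-!
Let `R` and `S` be the images of retractions `r` and `s`. Iterating `r ∘ s` as long as the rank of
its image drops yields an image `T ≤ R` that contains `R ⊓ S` and on which `r ∘ s` is injective, and
`R ⊓ S` is the equalizer of the inclusion of `T` and `s`, two maps `α` and `β` that agree after
`r ∘ s`. Suppose `α ≠ β` and let `Q` be the largest quotient of `G` in which they agree. Some edge
of the Cayley graph of `Q` is crossed differently by the paths `α h` and `β h`, and the difference
of the two crossing numbers is a nonconstant almost invariant function of `h ∈ T`, invariant under
left translation by the equalizer. The last edge of the Cayley tree of `T` along which such a
function jumps yields a cut vertex in the Whitehead graph of any finite subset of the equalizer.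
Minimising the total length of the subset over all automorphisms of `T` therefore puts it in a
proper retract of `T`, and induction on the rank puts it in a retract contained in the equalizer.

Free groups of finite rank are Hopfian, so a retract properly contained in another one has smaller
rank. Hence a maximal retract contained in the equalizer is all of it, and a minimal retract
containing an intersection of retracts is that intersection.
-/

open FreeGroup

/-! ### Residual finiteness and the Hopf property -/

section Hopf

variable {X G H K : Type*} [Group G] [Group H] [Group K]

theorem exists_perm_extending_translations (B : Set (FreeGroup X)) [Finite B] :
    ∃ π : FreeGroup X →* Equiv.Perm B,
      ∀ x (b : B) (hb : of x * b.1 ∈ B), π (of x) b = ⟨of x * b, hb⟩ := by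
  classical
  let e (x : X) : {b : B // of x * b.1 ∈ B} ≃ {b : B // (of x)⁻¹ * b.1 ∈ B} :=
    { toFun := fun b => ⟨⟨of x * b.1.1, b.2⟩, by simp⟩
      invFun := fun b => ⟨⟨(of x)⁻¹ * b.1.1, b.2⟩, by simp⟩
      left_inv := fun b => by simp
      right_inv := fun b => by simp }
  have := Fintype.ofFinite B
  refine ⟨lift fun x => (e x).extendSubtype, fun x b hb => ?_⟩
  rw [lift_apply_of]
  exact Equiv.extendSubtype_apply_of_mem (e x) b hb

theorem mk_cons (z : X × Bool) (L : List (X × Bool)) : mk (z :: L) = mk [z] * mk L := by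
  simp [mul_mk]

theorem mk_singleton_false (x : X) : mk [(x, false)] = (of x)⁻¹ := by
  simp [of, inv_mk, invRev]

theorem mk_singleton_ne_one (z : X × Bool) : mk [z] ≠ 1 := by
  obtain ⟨x, b⟩ := z
  cases b
  · rw [mk_singleton_false]
    exact inv_ne_one.2 (of_ne_one x)
  · exact of_ne_one x

instance residuallyFinite_freeGroup : Group.ResiduallyFinite (FreeGroup X) := by
  classical
  refine Group.residuallyFinite_of_forall_exists_finite_monoidHom fun w hw => ?_
  let B : Set (FreeGroup X) := {h | h.toWord <:+ w.toWord}
  have : Finite B := ((List.finite_toSet w.toWord.tails).preimage toWord_injective.injOn).subset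
    fun h hh => (List.mem_tails _ _).2 hh
  have mk_mem {L : List (X × Bool)} (hL : L <:+ w.toWord) : mk L ∈ B := by
    have hred : IsReduced L := isReduced_toWord.infix hL.isInfix
    simpa [B, toWord_mk, hred.reduce_eq] using hL
  obtain ⟨π, hπ⟩ := exists_perm_extending_translations B
  have path (L : List (X × Bool)) (hL : L <:+ w.toWord) :
      π (mk L) ⟨mk [], mk_mem List.nil_suffix⟩ = ⟨mk L, mk_mem hL⟩ := by
    induction L with
    | nil => simp [← one_eq_mk]
    | cons z L ih =>
      have hL' : L <:+ w.toWord := (List.suffix_cons z L).trans hL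
      have hmem := mk_mem hL
      obtain ⟨x, b⟩ := z
      simp only [mk_cons (x, b) L, _root_.map_mul, Equiv.Perm.mul_apply, ih hL'] at hmem ⊢
      cases b
      · simp only [mk_singleton_false] at hmem ⊢
        rw [_root_.map_inv, Equiv.Perm.inv_eq_iff_eq, hπ x ⟨_, hmem⟩ (by simpa using mk_mem hL')]
        simp
      · exact hπ x _ hmem
  refine ⟨Equiv.Perm B, inferInstance, inferInstance, π, fun h => hw ?_⟩
  simpa [mk_toWord, h, ← one_eq_mk] using
    (congrArg Subtype.val (path w.toWord List.suffix_rfl)).symm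

theorem residuallyFinite_of_injective [Group.ResiduallyFinite H] (f : G →* H)
    (hf : Function.Injective f) : Group.ResiduallyFinite G := by
  refine Group.residuallyFinite_of_forall_exists_finite_monoidHom fun g hg => ?_
  obtain ⟨N, hN⟩ := Group.exists_finiteIndexNormalSubgroup_notMem (f g) ((map_ne_one_iff f hf).2 hg)
  exact ⟨H ⧸ N.toSubgroup, inferInstance, inferInstance, (QuotientGroup.mk' N.toSubgroup).comp f,
    fun h => hN ((QuotientGroup.eq_one_iff _).1 h)⟩

instance residuallyFinite_of_isFreeGroup [IsFreeGroup G] : Group.ResiduallyFinite G :=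
  residuallyFinite_of_injective (IsFreeGroup.toFreeGroup G).toMonoidHom
    (IsFreeGroup.toFreeGroup G).injective

instance finite_monoidHom_of_fg [Group.FG G] [Finite K] : Finite (G →* K) := by
  obtain ⟨S, hS, hfin⟩ := Group.fg_iff.1 ‹Group.FG G›
  have := hfin.to_subtype
  refine Finite.of_injective (fun (f : G →* K) (s : S) => f s) fun f g hfg => ?_
  exact MonoidHom.eq_of_eqOn_dense hS fun s hs => congrFun hfg ⟨s, hs⟩

-- Malcev: precomposition with `φ` permutes the finitely many homomorphisms to a finite group.
theorem injective_of_surjective_of_residuallyFinite [Group.FG G] [Group.ResiduallyFinite G]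
    (φ : G →* G) (hφ : Function.Surjective φ) : Function.Injective φ := by
  rw [injective_iff_map_eq_one]
  intro g hg
  by_contra hne
  obtain ⟨N, hN⟩ := Group.exists_finiteIndexNormalSubgroup_notMem g hne
  have hinj : Function.Injective fun ψ : G →* G ⧸ N.toSubgroup => ψ.comp φ :=
    fun _ _ h => (MonoidHom.cancel_right hφ).1 h
  obtain ⟨ψ, hψ⟩ := Finite.surjective_of_injective hinj (QuotientGroup.mk' N.toSubgroup)
  refine hN ((QuotientGroup.eq_one_iff g).1 ?_)
  rw [← QuotientGroup.mk'_apply, ← hψ, MonoidHom.comp_apply, hg, _root_.map_one]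

instance finite_generators_of_fg [IsFreeGroup G] [Group.FG G] :
    Finite (IsFreeGroup.Generators G) := by
  by_contra h
  rw [not_finite_iff_infinite] at h
  have : Finite (IsFreeGroup.Generators G → Multiplicative (ZMod 2)) :=
    Finite.of_equiv _ (IsFreeGroup.lift (G := G)).symm
  exact not_finite (IsFreeGroup.Generators G → Multiplicative (ZMod 2))

theorem rank_freeGroup_le (X : Type*) [Finite X] : Group.rank (FreeGroup X) ≤ Nat.card X := by
  classical
  have := Fintype.ofFinite X
  refine (Group.rank_le (S := Finset.univ.image of) ?_).trans
    (Finset.card_image_le.trans_eq (by simp))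
  simp [closure_range_of]

theorem exists_surjective_of_rank_le [IsFreeGroup G] [Group.FG G] [Group.FG H]
    (h : Group.rank H ≤ Group.rank G) : ∃ f : G →* H, Function.Surjective f := by
  obtain ⟨S, hcard, hS⟩ := Group.rank_spec H
  have hle : Nat.card S ≤ Nat.card (IsFreeGroup.Generators G) := by
    rw [Nat.card_eq_fintype_card, Fintype.card_coe, hcard]
    exact h.trans ((Group.rank_congr (IsFreeGroup.toFreeGroup G)).trans_le (rank_freeGroup_le _))
  obtain ⟨i, hi⟩ : ∃ i : S → IsFreeGroup.Generators G, Function.Injective i := by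
    have := Fintype.ofFinite (IsFreeGroup.Generators G)
    simp only [Nat.card_eq_fintype_card] at hle
    exact (Function.Embedding.nonempty_of_card_le hle).elim fun i => ⟨i, i.injective⟩
  refine ⟨IsFreeGroup.lift (Function.extend i Subtype.val 1), MonoidHom.range_eq_top.1 ?_⟩
  rw [← top_le_iff, ← hS, Subgroup.closure_le]
  intro s hs
  exact ⟨IsFreeGroup.of (i ⟨s, hs⟩), by simp [hi.extend_apply]⟩

theorem rank_lt_of_surjective_of_not_injective [Group.FG G] [IsFreeGroup H] [Group.FG H]
    (f : G →* H) (hf : Function.Surjective f) (hinj : ¬ Function.Injective f) :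
    Group.rank H < Group.rank G := by
  by_contra! hle
  obtain ⟨g, hg⟩ := exists_surjective_of_rank_le hle
  have hfg : Function.Injective (f ∘ g) :=
    injective_of_surjective_of_residuallyFinite (f.comp g) (hf.comp hg)
  exact hinj (hfg.of_comp_right hg)

end Hopf

/-! ### Retracts -/

section Retract

variable {G H : Type*} [Group G] [Group H] {L M : Subgroup G}

theorem isRetract_top : IsRetract (⊤ : Subgroup G) :=
  ⟨MonoidHom.id G, MonoidHom.range_eq_top.2 Function.surjective_id, fun _ _ => rfl⟩

theorem isRetract_range_of_idempotent (r : G →* G) (hr : ∀ g, r (r g) = r g) :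
    IsRetract r.range :=
  ⟨r, rfl, by rintro _ ⟨g, rfl⟩; exact hr g⟩

theorem isRetract_bot : IsRetract (⊥ : Subgroup G) :=
  ⟨1, MonoidHom.range_one, fun _ hx => (Subgroup.mem_bot.1 hx).symm⟩

theorem IsRetract.comap_mulEquiv {L : Subgroup H} (hL : IsRetract L) (e : G ≃* H) :
    IsRetract (L.comap e.toMonoidHom) := by
  obtain ⟨r, rfl, hr⟩ := hL
  refine ⟨(e.symm.toMonoidHom.comp r).comp e.toMonoidHom, ?_, fun x hx => ?_⟩
  · ext x
    constructor
    · rintro ⟨y, rfl⟩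
      exact ⟨e y, by simp⟩
    · rintro ⟨y, hy⟩
      refine ⟨e.symm y, ?_⟩
      simp [hy]
  · exact (e.symm_apply_eq).2 (hr _ hx)

theorem IsRetract.map_subtype_range {ψ : G →* G} {E : Subgroup ψ.range} (hE : IsRetract E)
    (hψ : ∀ x ∈ E.map ψ.range.subtype, ψ x = x) : IsRetract (E.map ψ.range.subtype) := by
  obtain ⟨r, rfl, hr⟩ := hE
  refine ⟨ψ.range.subtype.comp (r.comp ψ.rangeRestrict), ?_, ?_⟩
  · rw [MonoidHom.range_comp, MonoidHom.range_comp, MonoidHom.range_eq_top.2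
      ψ.rangeRestrict_surjective, ← MonoidHom.range_eq_map]
  · rintro _ ⟨x, hx, rfl⟩
    have hψx : ψ.rangeRestrict x = x := Subtype.ext (hψ x ⟨x, hx, rfl⟩)
    simp [hψx, hr x hx]

theorem IsRetract.map_subtype (hL : IsRetract L) {E : Subgroup L} (hE : IsRetract E) :
    IsRetract (E.map L.subtype) := by
  obtain ⟨r, rfl, hr⟩ := hL
  exact hE.map_subtype_range fun x hx => hr x (Subgroup.map_subtype_le E hx)

theorem IsRetract.fg [Group.FG G] (hL : IsRetract L) : Group.FG L := by
  obtain ⟨r, rfl, -⟩ := hL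
  infer_instance

theorem IsRetract.rank_lt [IsFreeGroup G] [Group.FG G] (hL : IsRetract L) (hLM : L < M)
    [Group.FG L] [Group.FG M] : Group.rank L < Group.rank M := by
  obtain ⟨r, rfl, hr⟩ := hL
  have surj : Function.Surjective (r.rangeRestrict.comp M.subtype) := by
    intro x
    exact ⟨⟨x, hLM.le x.2⟩, Subtype.ext (hr x x.2)⟩
  refine rank_lt_of_surjective_of_not_injective _ surj fun hinj => hLM.not_ge fun x hx => ?_
  have hrx : r x ∈ r.range := ⟨x, rfl⟩
  have hfix : (⟨r x, hLM.le hrx⟩ : M) = ⟨x, hx⟩ := hinj (Subtype.ext (hr _ hrx))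
  exact ⟨x, congrArg Subtype.val hfix⟩

theorem exists_strictMono_isRetract (G : Type*) [Group G] [IsFreeGroup G] [Group.FG G] :
    ∃ d : {L : Subgroup G // IsRetract L} → Fin (Group.rank G + 1), StrictMono d := by
  have fg (L : {L : Subgroup G // IsRetract L}) : Group.FG L.1 := L.2.fg
  have rank_le (L : {L : Subgroup G // IsRetract L}) : Group.rank L.1 ≤ Group.rank G := by
    obtain ⟨_, r, rfl, -⟩ := L
    exact Group.rank_le_of_surjective r.rangeRestrict r.rangeRestrict_surjective
  exact ⟨fun L => ⟨Group.rank L.1, Nat.lt_succ_of_le (rank_le L)⟩, fun L M h => L.2.rank_lt h⟩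

instance wellFoundedLT_isRetract [IsFreeGroup G] [Group.FG G] :
    WellFoundedLT {L : Subgroup G // IsRetract L} :=
  (exists_strictMono_isRetract G).elim fun _ hd => hd.wellFoundedLT

instance wellFoundedGT_isRetract [IsFreeGroup G] [Group.FG G] :
    WellFoundedGT {L : Subgroup G // IsRetract L} :=
  (exists_strictMono_isRetract G).elim fun _ hd => hd.wellFoundedGT

theorem exists_injOn_range_of_fixed_points [IsFreeGroup G] [Group.FG G] (φ : G →* G) :
    ∃ ψ : G →* G, ψ.range ≤ φ.range ∧ (∀ x, φ x = x → ψ x = x) ∧ Set.InjOn φ ψ.range := by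
  obtain ⟨ψ, ⟨hle, hfix⟩, hmin⟩ := exists_minimalFor_of_wellFoundedLT
    (fun ψ : G →* G => ψ.range ≤ φ.range ∧ ∀ x, φ x = x → ψ x = x)
    (fun ψ => Group.rank ψ.range) ⟨φ, le_rfl, fun _ => id⟩
  refine ⟨ψ, hle, hfix, ?_⟩
  let f : ψ.range →* (φ.comp ψ).range :=
    (φ.comp ψ.range.subtype).codRestrict _ (by rintro ⟨_, g, rfl⟩; exact ⟨g, rfl⟩)
  have hf : Function.Surjective f := by
    rintro ⟨_, g, rfl⟩
    exact ⟨⟨ψ g, g, rfl⟩, rfl⟩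
  have hinj : Function.Injective f := by
    by_contra h
    have hlt := rank_lt_of_surjective_of_not_injective f hf h
    exact hlt.not_ge (hmin ⟨by rintro _ ⟨g, rfl⟩; exact ⟨ψ g, rfl⟩,
      fun x hx => by simp [hfix x hx, hx]⟩ hlt.le)
  intro x hx y hy hxy
  exact congrArg Subtype.val (@hinj ⟨x, hx⟩ ⟨y, hy⟩ (Subtype.ext hxy))

end Retract

/-! ### Crossing numbers -/

section Letters

variable {X : Type*}

/-- The inverse of a letter of a word: `mk [letterInv z] = (mk [z])⁻¹`. -/
def letterInv (z : X × Bool) : X × Bool := (z.1, !z.2)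

@[simp]
theorem letterInv_letterInv (z : X × Bool) : letterInv (letterInv z) = z := by
  simp [letterInv]

theorem letterInv_ne (z : X × Bool) : letterInv z ≠ z := by
  simp [letterInv, Prod.ext_iff]

@[simp]
theorem mk_letterInv (z : X × Bool) : mk [letterInv z] = (mk [z])⁻¹ := by
  simp [letterInv, inv_mk, invRev]

theorem not_isReduced_cons_letterInv_cons (z : X × Bool) (L : List (X × Bool)) :
    ¬ IsReduced (z :: letterInv z :: L) := by
  simp [letterInv, isReduced_cons_cons]

end Letters

section Crossing

variable {Y Q : Type*} [Group Q] (π : FreeGroup Y →* Q) (x₀ : Y) (q₀ : Q)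

open Classical in
/-- The action of the free group on the infinite cyclic cover of the Cayley graph of `Q` that
unwinds the edge labelled `x₀` starting at `q₀`. Words act letter by letter from the right. -/
noncomputable def crossingAction : FreeGroup Y →* Equiv.Perm (Q × ℤ) :=
  lift fun y =>
    { toFun := fun a => (π (of y) * a.1, a.2 + if y = x₀ ∧ a.1 = q₀ then 1 else 0)
      invFun := fun a =>
        ((π (of y))⁻¹ * a.1, a.2 - if y = x₀ ∧ (π (of y))⁻¹ * a.1 = q₀ then 1 else 0)
      left_inv := fun a => by simp
      right_inv := fun a => by simp }

/-- The number of times, counted with signs, that the path labelled `w` starting at `q` crosses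
the edge labelled `x₀` starting at `q₀` in the Cayley graph of `Q`. -/
noncomputable def crossing (w : FreeGroup Y) (q : Q) : ℤ := (crossingAction π x₀ q₀ w (q, 0)).2

open Classical in
theorem crossingAction_of (y : Y) (q : Q) (n : ℤ) :
    crossingAction π x₀ q₀ (of y) (q, n) =
      (π (of y) * q, n + if y = x₀ ∧ q = q₀ then 1 else 0) := by
  simp [crossingAction]

theorem crossingAction_apply (w : FreeGroup Y) (q : Q) (n : ℤ) :
    crossingAction π x₀ q₀ w (q, n) = (π w * q, n + crossing π x₀ q₀ w q) := by
  suffices h : ∃ c : Q → ℤ, ∀ q n, crossingAction π x₀ q₀ w (q, n) = (π w * q, n + c q) by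
    obtain ⟨c, hc⟩ := h
    simp [crossing, hc]
  classical
  induction w using FreeGroup.induction_on with
  | C1 => exact ⟨0, by simp⟩
  | of y => exact ⟨_, crossingAction_of π x₀ q₀ y⟩
  | inv_of y ih =>
    obtain ⟨c, hc⟩ := ih
    refine ⟨fun q => - c ((π (of y))⁻¹ * q), fun q n => ?_⟩
    rw [_root_.map_inv, Equiv.Perm.inv_eq_iff_eq, hc]
    simp
  | mul v w hv hw =>
    obtain ⟨c, hc⟩ := hv
    obtain ⟨d, hd⟩ := hw
    refine ⟨fun q => d q + c (π w * q), fun q n => ?_⟩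
    simp [hc, hd, mul_assoc, add_assoc]

theorem crossing_mul (v w : FreeGroup Y) (q : Q) :
    crossing π x₀ q₀ (v * w) q = crossing π x₀ q₀ w q + crossing π x₀ q₀ v (π w * q) := by
  rw [crossing, _root_.map_mul, Equiv.Perm.mul_apply, crossingAction_apply, crossingAction_apply]
  simp

@[simp]
theorem crossing_one (q : Q) : crossing π x₀ q₀ 1 q = 0 := by
  simp [crossing]

open Classical in
theorem crossing_of (y : Y) (q : Q) :
    crossing π x₀ q₀ (of y) q = if y = x₀ ∧ q = q₀ then 1 else 0 := by
  simp [crossing, crossingAction_of]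

theorem crossing_inv (w : FreeGroup Y) (q : Q) :
    crossing π x₀ q₀ w⁻¹ q = - crossing π x₀ q₀ w ((π w)⁻¹ * q) := by
  have h := crossing_mul π x₀ q₀ w w⁻¹ q
  rw [mul_inv_cancel, crossing_one, _root_.map_inv] at h
  lia

theorem finite_crossing_ne_zero (w : FreeGroup Y) : {q | crossing π x₀ q₀ w q ≠ 0}.Finite := by
  classical
  induction w using FreeGroup.induction_on with
  | C1 => simp
  | of y =>
    refine (Set.finite_singleton q₀).subset fun q hq => ?_
    by_contra h
    simp_all [crossing_of]
  | inv_of y ih =>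
    refine (ih.image (π (of y) * ·)).subset fun q hq => ?_
    refine ⟨(π (of y))⁻¹ * q, ?_, by simp⟩
    simpa [crossing_inv] using hq
  | mul v w hv hw =>
    refine (hw.union (hv.image ((π w)⁻¹ * ·))).subset fun q hq => ?_
    by_cases h : crossing π x₀ q₀ w q = 0
    · right
      refine ⟨π w * q, ?_, by simp⟩
      simpa [crossing_mul, h] using hq
    · exact Or.inl h

variable {π x₀ q₀}

theorem crossing_mk_singleton_ne_zero_iff {x : Y} {b : Bool} {q : Q} :
    crossing π x₀ q₀ (mk [(x, b)]) q ≠ 0 ↔ x = x₀ ∧ q = if b then q₀ else π (of x₀) * q₀ := by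
  classical
  cases b
  · rw [mk_singleton_false, crossing_inv, crossing_of]
    simp only [ne_eq, neg_eq_zero, ite_eq_right_iff, one_ne_zero, imp_false, not_not,
      Bool.false_eq_true, if_false, inv_mul_eq_iff_eq_mul]
    exact and_congr_right fun h => by rw [h]
  · simp [← of.eq_1, crossing_of]

theorem exists_crossing_mk_singleton_ne_zero (π : FreeGroup Y →* Q) (z : Y × Bool) (q : Q) :
    ∃ x₀ q₀, crossing π x₀ q₀ (mk [z]) q ≠ 0 := by
  obtain ⟨x, b⟩ := z
  refine ⟨x, if b then q else (π (of x))⁻¹ * q, crossing_mk_singleton_ne_zero_iff.2 ⟨rfl, ?_⟩⟩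
  cases b <;> simp

theorem eq_or_eq_letterInv_of_crossing_ne_zero {z z' : Y × Bool} {q q' : Q}
    (h : crossing π x₀ q₀ (mk [z]) q ≠ 0) (h' : crossing π x₀ q₀ (mk [z']) q' ≠ 0) :
    z' = z ∧ q' = q ∨ z' = letterInv z ∧ q' = π (mk [z]) * q := by
  obtain ⟨x, b⟩ := z
  obtain ⟨x', b'⟩ := z'
  obtain ⟨rfl, rfl⟩ := crossing_mk_singleton_ne_zero_iff.1 h
  obtain ⟨rfl, rfl⟩ := crossing_mk_singleton_ne_zero_iff.1 h'
  cases b <;> cases b' <;> simp [letterInv, mk_singleton_false, ← of.eq_1]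

theorem crossing_mk_eq_zero {L : List (Y × Bool)}
    (h : ∀ A z B, L = A ++ z :: B → crossing π x₀ q₀ (mk [z]) (π (mk B)) = 0) :
    crossing π x₀ q₀ (mk L) 1 = 0 := by
  induction L with
  | nil => simp [← one_eq_mk]
  | cons z L ih =>
    rw [mk_cons, crossing_mul, mul_one, h [] z L rfl, add_zero]
    exact ih fun A z' B hL => h (z :: A) z' B (by simp [hL])

theorem exists_shortest_mem_ker (π : FreeGroup Y →* Q) (hπ : ¬ Function.Injective π) :
    ∃ z L, IsReduced (z :: L) ∧ π (mk (z :: L)) = 1 ∧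
      ∀ B, B <:+: z :: L → B.length ≤ L.length → π (mk B) = 1 → B = [] := by
  classical
  rw [injective_iff_map_eq_one] at hπ
  push Not at hπ
  obtain ⟨m, ⟨hm, hm1⟩, hmin⟩ := exists_minimalFor_of_wellFoundedLT _ (norm (α := Y)) hπ
  obtain ⟨z, L, hw⟩ := List.exists_cons_of_ne_nil (mt toWord_eq_nil_iff.1 hm1)
  refine ⟨z, L, hw ▸ isReduced_toWord, by rwa [← hw, mk_toWord], fun B hB hlen hπB => ?_⟩
  by_contra hne
  have hred : IsReduced B := isReduced_toWord.infix (hw ▸ hB)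
  have hB1 : mk B ≠ 1 := fun h1 => hne (by rw [← hred.reduce_eq, ← toWord_mk, h1, toWord_one])
  have hlt : (mk B).norm < m.norm :=
    norm_mk_le.trans_lt (by rw [FreeGroup.norm, hw, List.length_cons]; lia)
  exact hlt.not_ge (hmin ⟨hπB, hB1⟩ hlt.le)

-- A shortest nontrivial element of the kernel traces out a simple closed path, so it crosses its
-- first edge only once.
theorem exists_crossing_ne_zero (π : FreeGroup Y →* Q) (hπ : ¬ Function.Injective π) :
    ∃ x₀ q₀ m, π m = 1 ∧ crossing π x₀ q₀ m 1 ≠ 0 := by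
  obtain ⟨z, L, hred, hker, hshort⟩ := exists_shortest_mem_ker π hπ
  obtain ⟨x₀, q₀, hz⟩ := exists_crossing_mk_singleton_ne_zero π z (π (mk L))
  refine ⟨x₀, q₀, mk (z :: L), hker, ?_⟩
  suffices hL : crossing π x₀ q₀ (mk L) 1 = 0 by rwa [mk_cons, crossing_mul, hL, zero_add, mul_one]
  refine crossing_mk_eq_zero fun A z' B hAB => ?_
  by_contra hz'
  have hsplit : π (mk L) = π (mk A) * (π (mk [z']) * π (mk B)) := by
    rw [hAB, ← mul_mk, mk_cons, _root_.map_mul, _root_.map_mul]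
  obtain ⟨rfl, hq⟩ | ⟨rfl, hq⟩ := eq_or_eq_letterInv_of_crossing_ne_zero hz hz'
  · have hA : A ++ [z'] = [] := by
      refine hshort _ ⟨[z'], B, by simp [hAB]⟩ (by simp [hAB]) ?_
      rwa [hq, ← mul_assoc, right_eq_mul, ← _root_.map_mul, mul_mk] at hsplit
    simp at hA
  · have hA : A = [] := by
      refine hshort _ ⟨[z], letterInv z :: B, by simp [hAB]⟩ (by simp [hAB]) ?_
      rwa [hq, mk_letterInv, _root_.map_inv, inv_mul_cancel_left, right_eq_mul] at hsplit
    subst hA hAB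
    exact not_isReduced_cons_letterInv_cons z B hred

end Crossing

section AlmostInvariant

variable {H Y Q : Type*} [Group H] [Group Q]

/-- A function on a group is almost invariant if every left translation changes only finitely many
of its values. -/
def IsAlmostInvariant (f : H → ℤ) : Prop := ∀ g, {h | f (g * h) ≠ f h}.Finite

variable {α β : H →* FreeGroup Y} {π : FreeGroup Y →* Q}

theorem crossing_sub_crossing_mul (hπ : ∀ h, π (α h) = π (β h)) (x₀ : Y) (q₀ q : Q) (g h : H) :
    crossing π x₀ q₀ (α (g * h)) q - crossing π x₀ q₀ (β (g * h)) q =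
      (crossing π x₀ q₀ (α h) q - crossing π x₀ q₀ (β h) q) +
      (crossing π x₀ q₀ (α g) (π (α h) * q) - crossing π x₀ q₀ (β g) (π (α h) * q)) := by
  simp only [_root_.map_mul α, _root_.map_mul β, crossing_mul, hπ]
  ring

theorem isAlmostInvariant_crossing_sub_crossing (hπ : ∀ h, π (α h) = π (β h))
    (hinj : Function.Injective (π ∘ α)) (x₀ : Y) (q₀ q : Q) :
    IsAlmostInvariant fun h => crossing π x₀ q₀ (α h) q - crossing π x₀ q₀ (β h) q := by
  intro g
  have hfin := (finite_crossing_ne_zero π x₀ q₀ (α g)).union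
    (finite_crossing_ne_zero π x₀ q₀ (β g))
  have hinj' : Function.Injective fun h => π (α h) * q :=
    fun _ _ hab => hinj (mul_right_cancel hab)
  refine (hfin.preimage hinj'.injOn).subset fun h hh => ?_
  by_contra! hzero
  simp only [Set.preimage_union, Set.mem_union, Set.mem_preimage, Set.mem_ofPred_eq, not_or,
    not_not] at hzero
  exact hh (by simp only [crossing_sub_crossing_mul hπ, hzero.1, hzero.2, sub_zero, add_zero])

theorem normalClosure_mul_inv_le_ker_iff {K : Type*} [Group K] {φ : FreeGroup Y →* K} :
    Subgroup.normalClosure (Set.range fun h => α h * (β h)⁻¹) ≤ φ.ker ↔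
      ∀ h, φ (α h) = φ (β h) := by
  rw [← Subgroup.normalClosure_subset_iff, Set.range_subset_iff]
  simp only [SetLike.mem_coe, MonoidHom.mem_ker, _root_.map_mul, _root_.map_inv, mul_inv_eq_one]

theorem exists_crossing_ne_crossing (hne : α ≠ β)
    (hπ : π.ker = Subgroup.normalClosure (Set.range fun h => α h * (β h)⁻¹)) :
    ∃ x₀ q₀ h q, crossing π x₀ q₀ (α h) q ≠ crossing π x₀ q₀ (β h) q := by
  have hπαβ : ∀ h, π (α h) = π (β h) := normalClosure_mul_inv_le_ker_iff.1 hπ.ge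
  have hker : ¬ Function.Injective π := fun h => hne (MonoidHom.ext fun g => h (hπαβ g))
  obtain ⟨x₀, q₀, m, hm, hcm⟩ := exists_crossing_ne_zero π hker
  refine ⟨x₀, q₀, ?_⟩
  by_contra! hall
  have haction (h : H) : crossingAction π x₀ q₀ (α h) = crossingAction π x₀ q₀ (β h) := by
    ext1 ⟨q, n⟩
    rw [crossingAction_apply, crossingAction_apply, hπαβ, hall]
  have hm' : crossingAction π x₀ q₀ m = 1 :=
    normalClosure_mul_inv_le_ker_iff.2 haction (hπ.le hm)
  exact hcm (by simp [crossing, hm'])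

theorem exists_isAlmostInvariant_of_ne (e : FreeGroup Y →* Q) (he : ∀ h, e (α h) = e (β h))
    (hinj : Function.Injective (e ∘ α)) (hne : α ≠ β) :
    ∃ f : H → ℤ, (∃ h, f h ≠ f 1) ∧ IsAlmostInvariant f ∧
      ∀ g, α g = β g → ∀ h, f (g * h) = f h := by
  let M := Subgroup.normalClosure (Set.range fun h => α h * (β h)⁻¹)
  let π := QuotientGroup.mk' M
  have hπ : π.ker = M := QuotientGroup.ker_mk' M
  have hπαβ : ∀ h, π (α h) = π (β h) := normalClosure_mul_inv_le_ker_iff.1 hπ.ge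
  have hπinj : Function.Injective (π.comp α) := by
    rw [← MonoidHom.coe_comp, injective_iff_map_eq_one] at hinj
    rw [injective_iff_map_eq_one]
    exact fun h hh => hinj h (normalClosure_mul_inv_le_ker_iff.2 he (hπ.le hh))
  obtain ⟨x₀, q₀, h, q, hhq⟩ := exists_crossing_ne_crossing hne hπ
  refine ⟨_, ⟨h, ?_⟩, isAlmostInvariant_crossing_sub_crossing hπαβ hπinj x₀ q₀ q, ?_⟩
  · simpa [sub_eq_zero] using hhq
  · intro g hg h
    rw [crossing_sub_crossing_mul hπαβ, hg, sub_self, add_zero]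

end AlmostInvariant

/-! ### Whitehead automorphisms -/

section Whitehead

variable {X : Type*}

/-- The edges of the Whitehead graph traced by the word `L`, where `o` is the letter preceding it:
each passage between two letters joins the first one to the inverse of the second one, and the
vertex `none` stands for both ends of a word. -/
def turns : Option (X × Bool) → List (X × Bool) → List (Option (X × Bool) × Option (X × Bool))
  | o, [] => [(o, none)]
  | o, z :: L => (o, some (letterInv z)) :: turns (some z) L

theorem exists_append_of_mem_turns {t : Option (X × Bool) × Option (X × Bool)}
    {o : Option (X × Bool)} {L : List (X × Bool)} (ht : t ∈ turns o L) :
    ∃ A B, L = A ++ B ∧ t = (A.getLast?.or o, B.head?.map letterInv) := by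
  induction L generalizing o with
  | nil => exact ⟨[], [], rfl, List.mem_singleton.1 ht⟩
  | cons z L ih =>
    obtain rfl | ht := List.mem_cons.1 ht
    · exact ⟨[], z :: L, rfl, rfl⟩
    · obtain ⟨A, B, rfl, rfl⟩ := ih ht
      refine ⟨z :: A, B, rfl, ?_⟩
      cases h : A.getLast? <;> simp [List.getLast?_cons, h]

open Classical in
/-- The position of the vertex `o` relative to the vertex set `Z`, normalised to vanish at
`none`. -/
noncomputable def side (Z : Set (Option (X × Bool))) (o : Option (X × Bool)) : ℤ :=
  (if o ∈ Z then 1 else 0) - if none ∈ Z then 1 else 0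

@[simp]
theorem side_none (Z : Set (Option (X × Bool))) : side Z none = 0 := sub_self _

theorem side_eq_side_iff {Z : Set (Option (X × Bool))} {o o' : Option (X × Bool)} :
    side Z o = side Z o' ↔ (o ∈ Z ↔ o' ∈ Z) := by
  rw [side, side, sub_left_inj]
  by_cases h : o ∈ Z <;> by_cases h' : o' ∈ Z <;> simp [h, h']

theorem side_eq_side_add_one {Z : Set (Option (X × Bool))} {o o' : Option (X × Bool)} (ho : o ∈ Z)
    (ho' : o' ∉ Z) : side Z o = side Z o' + 1 := by
  simp only [side, ho, ho', if_true, if_false]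
  ring

/-- The endomorphism multiplying the letters of `Z` by `g` on the right and their inverses by `g⁻¹`
on the left, composed with conjugation by `g` if `none ∈ Z`. It is a Whitehead automorphism if `g`
is a letter and neither `g` nor `g⁻¹` belongs to `Z`. -/
noncomputable def whitehead (Z : Set (Option (X × Bool))) (g : FreeGroup X) :
    FreeGroup X →* FreeGroup X :=
  lift fun x => g ^ (-side Z (some (x, false))) * of x * g ^ side Z (some (x, true))

variable {Z : Set (Option (X × Bool))} {g : FreeGroup X} {o : Option (X × Bool)}
  {L : List (X × Bool)} {a : X × Bool}

theorem whitehead_mk_singleton (Z : Set (Option (X × Bool))) (g : FreeGroup X) (z : X × Bool) :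
    whitehead Z g (mk [z]) =
      g ^ (-side Z (some (letterInv z))) * mk [z] * g ^ side Z (some z) := by
  obtain ⟨x, b⟩ := z
  cases b <;> simp [whitehead, letterInv, mk_singleton_false, ← of.eq_1, mul_assoc]

theorem zpow_mul_whitehead_mk_cons (k : ℤ) (z : X × Bool) (L : List (X × Bool)) :
    g ^ k * whitehead Z g (mk (z :: L)) =
      g ^ (k - side Z (some (letterInv z))) *
        (mk [z] * (g ^ side Z (some z) * whitehead Z g (mk L))) := by
  rw [mk_cons, _root_.map_mul, whitehead_mk_singleton, zpow_sub, zpow_neg]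
  simp only [mul_assoc]

theorem zpow_side_mul_whitehead_mk (h : ∀ t ∈ turns o L, (t.1 ∈ Z ↔ t.2 ∈ Z)) :
    g ^ side Z o * whitehead Z g (mk L) = mk L := by
  simp only [← side_eq_side_iff] at h
  induction L generalizing o with
  | nil =>
    have ho : side Z o = 0 := (h _ (List.mem_singleton_self _)).trans (side_none Z)
    simp [ho, ← one_eq_mk]
  | cons z L ih =>
    obtain ⟨ho, hL⟩ := List.forall_mem_cons.1 h
    rw [zpow_mul_whitehead_mk_cons, ih hL, ho, sub_self, zpow_zero, one_mul, ← mk_cons]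

theorem whitehead_eq_self [DecidableEq X] {p : FreeGroup X}
    (h : ∀ t ∈ turns none p.toWord, (t.1 ∈ Z ↔ t.2 ∈ Z)) : whitehead Z g p = p := by
  simpa [mk_toWord] using zpow_side_mul_whitehead_mk (g := g) h

theorem whitehead_inv_whitehead (hg : whitehead Z g⁻¹ g = g) (w : FreeGroup X) :
    whitehead Z g⁻¹ (whitehead Z g w) = w := by
  suffices h : (whitehead Z g⁻¹).comp (whitehead Z g) = MonoidHom.id _ from DFunLike.congr_fun h w
  ext x
  simp [whitehead_mk_singleton, of.eq_1, hg, mul_assoc, -inv_mk, -mul_mk]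

theorem whitehead_mk_singleton_eq_self (ha : some a ∈ Z ↔ some (letterInv a) ∈ Z)
    (hg : Commute g (mk [a])) : whitehead Z g (mk [a]) = mk [a] := by
  rw [whitehead_mk_singleton, side_eq_side_iff.2 ha, (hg.zpow_left _).eq, mul_assoc, ← zpow_add,
    neg_add_cancel, zpow_zero, mul_one]

theorem exists_mulEquiv_eq_whitehead (ha : some a ∈ Z ↔ some (letterInv a) ∈ Z) :
    ∃ φ : FreeGroup X ≃* FreeGroup X, ∀ w, φ w = whitehead Z (mk [a]) w := by
  have hfix {g : FreeGroup X} (hg : Commute g (mk [a])) := whitehead_mk_singleton_eq_self ha hg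
  have h₁ : whitehead Z (mk [a])⁻¹ (mk [a]) = mk [a] := hfix (Commute.refl _).inv_left
  have h₂ : whitehead Z (mk [a])⁻¹⁻¹ (mk [a])⁻¹ = (mk [a])⁻¹ := by
    rw [inv_inv, _root_.map_inv, hfix (Commute.refl _)]
  refine ⟨{ whitehead Z (mk [a]) with
    invFun := whitehead Z (mk [a])⁻¹
    left_inv := whitehead_inv_whitehead h₁
    right_inv := fun w => ?_ }, fun _ => rfl⟩
  have h := whitehead_inv_whitehead h₂ w
  rwa [inv_inv] at h

theorem norm_mk_singleton_mul_le [DecidableEq X] (z : X × Bool) (w : FreeGroup X) :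
    (mk [z] * w).norm ≤ w.norm + 1 := by
  have hz : (mk [z]).norm ≤ 1 := norm_mk_le
  have hmul := norm_mul_le (mk [z]) w
  lia

theorem side_sub_side_cases {o' : Option (X × Bool)} (ha : some a ∉ Z)
    (h : o ≠ some a → o' ≠ some a → (o ∈ Z ↔ o' ∈ Z)) :
    (o ∈ Z ↔ o' ∈ Z) ∧ side Z o - side Z o' = 0 ∨
    ¬ (o ∈ Z ↔ o' ∈ Z) ∧ o = some a ∧ side Z o - side Z o' = -1 ∨
    ¬ (o ∈ Z ↔ o' ∈ Z) ∧ o ≠ some a ∧ o' = some a ∧ side Z o - side Z o' = 1 := by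
  by_cases hoo' : o ∈ Z ↔ o' ∈ Z
  · exact Or.inl ⟨hoo', sub_eq_zero.2 (side_eq_side_iff.2 hoo')⟩
  by_cases ho : o = some a
  · subst ho
    have hside := side_eq_side_add_one (show o' ∈ Z by tauto) ha
    exact Or.inr (Or.inl ⟨hoo', rfl, by lia⟩)
  · obtain rfl : o' = some a := by tauto
    have hside := side_eq_side_add_one (show o ∈ Z by tauto) ha
    exact Or.inr (Or.inr ⟨hoo', ho, rfl, by lia⟩)

open Classical in
theorem norm_zpow_mul_add_le [DecidableEq X] {o' : Option (X × Bool)} {V : FreeGroup X} {c N : ℕ}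
    (ha : some a ∉ Z) (h : o ≠ some a → o' ≠ some a → (o ∈ Z ↔ o' ∈ Z)) (hV : V.norm + c ≤ N)
    (haV : o' = some a → (mk [a] * V).norm + c + 1 ≤ N) :
    (mk [a] ^ ((if o = some a then 1 else 0) + (side Z o - side Z o')) * V).norm +
      (c + if ¬ (o ∈ Z ↔ o' ∈ Z) then 1 else 0) ≤ N + if o = some a then 1 else 0 := by
  obtain ⟨ho, hs⟩ | ⟨ho, rfl, hs⟩ | ⟨ho, hoa, ho', hs⟩ := side_sub_side_cases ha h
  · have hmul := norm_mk_singleton_mul_le a V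
    simp only [hs, ho, not_true_eq_false, if_false, add_zero]
    split_ifs
    · rw [zpow_one]
      lia
    · rw [zpow_zero, one_mul]
      lia
  · simp only [hs, ho, if_true, not_false_eq_true, add_neg_cancel, zpow_zero, one_mul]
    lia
  · simpa [hs, ho, hoa, add_assoc] using haV ho'

-- The leading power of `a` accounts for a letter `o = a` that may cancel against the image of `L`.
open Classical in
theorem norm_whitehead_mk_add_countP_le [DecidableEq X] (ha : some a ∉ Z)
    (h : ∀ t ∈ turns o L, t.1 ≠ some a → t.2 ≠ some a → (t.1 ∈ Z ↔ t.2 ∈ Z)) :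
    (mk [a] ^ ((if o = some a then 1 else 0) + side Z o) * whitehead Z (mk [a]) (mk L)).norm +
      (turns o L).countP (fun t => ¬ (t.1 ∈ Z ↔ t.2 ∈ Z)) ≤
    L.length + if o = some a then 1 else 0 := by
  induction L generalizing o with
  | nil =>
    have hnil := norm_zpow_mul_add_le (V := 1) (c := 0) (N := 0) ha
      (h _ (List.mem_singleton_self _)) (by simp) (by simp)
    simpa only [turns, List.countP_cons, List.countP_nil, decide_eq_true_eq, side_none, sub_zero,
      ← one_eq_mk, _root_.map_one, List.length_nil] using hnil
  | cons z L ih =>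
    obtain ⟨ho, hL⟩ := List.forall_mem_cons.1 h
    specialize ih hL
    simp only [zpow_mul_whitehead_mk_cons, turns, List.countP_cons, List.length_cons,
      add_sub_assoc, decide_eq_true_eq]
    rw [zpow_add, mul_assoc] at ih
    set W := mk [a] ^ side Z (some z) * whitehead Z (mk [a]) (mk L)
    refine norm_zpow_mul_add_le ha ho ?_ fun hza => ?_
    · by_cases hza : z = a
      · subst hza
        simpa using ih
      · have hmul := norm_mk_singleton_mul_le z W
        simp only [Option.some.injEq, hza, if_false, zpow_zero, one_mul] at ih
        lia
    · obtain rfl : z = letterInv a := by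
        rw [← Option.some_injective _ hza, letterInv_letterInv]
      have hne : some (letterInv a) ≠ some a := by simp [letterInv_ne]
      simp only [hne, if_false, zpow_zero, one_mul] at ih
      rw [mk_letterInv, mul_inv_cancel_left]
      lia

open Classical in
theorem norm_whitehead_add_countP_le [DecidableEq X] {p : FreeGroup X} (ha : some a ∉ Z)
    (h : ∀ t ∈ turns none p.toWord, t.1 ≠ some a → t.2 ≠ some a → (t.1 ∈ Z ↔ t.2 ∈ Z)) :
    (whitehead Z (mk [a]) p).norm +
      (turns none p.toWord).countP (fun t => ¬ (t.1 ∈ Z ↔ t.2 ∈ Z)) ≤ p.norm := by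
  simpa [mk_toWord, FreeGroup.norm] using norm_whitehead_mk_add_countP_le ha h

theorem whitehead_whitehead_of_eq_one (hg : whitehead Z g g = 1) (w : FreeGroup X) :
    whitehead Z g (whitehead Z g w) = whitehead Z g w := by
  suffices h : (whitehead Z g).comp (whitehead Z g) = whitehead Z g from DFunLike.congr_fun h w
  ext x
  simp [whitehead_mk_singleton, of.eq_1, hg, -mul_mk]

theorem exists_isRetract_of_letterInv_notMem [DecidableEq X] (ha : some a ∈ Z)
    (ha' : some (letterInv a) ∉ Z) :
    ∃ L : Subgroup (FreeGroup X), IsRetract L ∧ L ≠ ⊤ ∧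
      ∀ p, (∀ t ∈ turns none p.toWord, (t.1 ∈ Z ↔ t.2 ∈ Z)) → p ∈ L := by
  have hkill : whitehead Z (mk [a])⁻¹ (mk [a]) = 1 := by
    rw [whitehead_mk_singleton, side_eq_side_add_one ha ha', inv_zpow', inv_zpow', neg_neg,
      ← zpow_add_one, ← zpow_add]
    simp
  have hidem := whitehead_whitehead_of_eq_one (show whitehead Z (mk [a])⁻¹ (mk [a])⁻¹ = 1 by
    rw [_root_.map_inv, hkill, inv_one])
  refine ⟨_, isRetract_range_of_idempotent _ hidem, fun htop => ?_,
    fun p hp => ⟨p, whitehead_eq_self hp⟩⟩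
  obtain ⟨w, hw⟩ := MonoidHom.range_eq_top.1 htop (mk [a])
  exact mk_singleton_ne_one a (by rw [← hw, ← hidem, hw, hkill])

theorem mem_iff_mem_of_mem_turns (hZ : ∀ z, some z ∈ Z ↔ some (letterInv z) ∈ Z)
    (h : ∀ t ∈ turns o L, (t.1 ∈ Z ↔ t.2 ∈ Z)) {t : Option (X × Bool) × Option (X × Bool)}
    (ht : t ∈ turns o L) : t.1 ∈ Z ↔ o ∈ Z := by
  induction L generalizing o with
  | nil => rw [List.mem_singleton.1 ht]
  | cons z L ih =>
    obtain ⟨ho, hL⟩ := List.forall_mem_cons.1 h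
    obtain rfl | ht := List.mem_cons.1 ht
    · rfl
    · rw [ih hL ht, hZ, ho]

theorem exists_isRetract_of_turns [DecidableEq X] (hZ : ∃ z, ¬ (some z ∈ Z ↔ none ∈ Z)) :
    ∃ L : Subgroup (FreeGroup X), IsRetract L ∧ L ≠ ⊤ ∧
      ∀ p, (∀ t ∈ turns none p.toWord, (t.1 ∈ Z ↔ t.2 ∈ Z)) → p ∈ L := by
  by_cases hsymm : ∃ a, some a ∈ Z ∧ some (letterInv a) ∉ Z
  · obtain ⟨a, ha, ha'⟩ := hsymm
    exact exists_isRetract_of_letterInv_notMem ha ha'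
  · push Not at hsymm
    have hsymm' (z) : some z ∈ Z ↔ some (letterInv z) ∈ Z :=
      ⟨hsymm z, fun hz => letterInv_letterInv z ▸ hsymm _ hz⟩
    obtain ⟨z, hz⟩ := hZ
    obtain ⟨L, hL, hne, hmem⟩ := exists_isRetract_of_letterInv_notMem
      (Set.mem_singleton (some z)) (a := z) (by simp [letterInv_ne])
    refine ⟨L, hL, hne, fun p hp => hmem p fun t ht => ?_⟩
    have h₁ : t.1 ∈ Z ↔ none ∈ Z := mem_iff_mem_of_mem_turns hsymm' hp ht
    have h₂ : t.2 ∈ Z ↔ none ∈ Z := (hp t ht).symm.trans h₁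
    exact iff_of_false (fun h => hz (h ▸ h₁)) (fun h => hz (h ▸ h₂))

end Whitehead

/-! ### Almost invariant functions on free groups -/

section CutVertex

variable {X : Type*}

theorem exists_set_avoiding_letter (Y : Set (Option (X × Bool))) (a : X × Bool) :
    ∃ Z : Set (Option (X × Bool)), some a ∉ Z ∧ some (letterInv a) ∉ Z ∧
      ∀ o o', o ≠ some a → o' ≠ some a → ((o ∈ Z ↔ o' ∈ Z) ↔ (o ∈ Y ↔ o' ∈ Y)) := by
  by_cases ha : some (letterInv a) ∈ Y
  · refine ⟨(insert (some a) Y)ᶜ, by simp, by simp [ha], fun o o' ho ho' => ?_⟩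
    simp [ho, ho', not_iff_not]
  · refine ⟨Y \ {some a}, by simp, by simp [ha], fun o o' ho ho' => ?_⟩
    simp [ho, ho']

-- Whitehead's cut vertex argument: `z₀` separates the Whitehead graph of `P`.
theorem exists_isRetract_or_exists_norm_lt [DecidableEq X] {P : Set (FreeGroup X)}
    {Y : Set (Option (X × Bool))} {z₀ : Option (X × Bool)}
    (hY : ∃ z ∉ z₀, ¬ (some z ∈ Y ↔ none ∈ Y))
    (hP : ∀ p ∈ P, ∀ t ∈ turns none p.toWord,
      (∀ a ∈ z₀, t.1 ≠ some a ∧ t.2 ≠ some a) → (t.1 ∈ Y ↔ t.2 ∈ Y)) :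
    (∃ L : Subgroup (FreeGroup X), IsRetract L ∧ L ≠ ⊤ ∧ P ⊆ L) ∨
      ∃ φ : FreeGroup X ≃* FreeGroup X,
        (∀ p ∈ P, (φ p).norm ≤ p.norm) ∧ ∃ p ∈ P, (φ p).norm < p.norm := by
  obtain ⟨z, hzz₀, hzY⟩ := hY
  obtain _ | a := z₀
  · obtain ⟨L, hL, hne, hmem⟩ := exists_isRetract_of_turns ⟨z, hzY⟩
    exact Or.inl ⟨L, hL, hne, fun p hp => hmem p fun t ht => hP p hp t ht (by simp)⟩
  have hza : some z ≠ some a := fun h => hzz₀ h.symm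
  obtain ⟨Z, ha, ha', hZ⟩ := exists_set_avoiding_letter Y a
  have hturn (p) (hp : p ∈ P) (t) (ht : t ∈ turns none p.toWord) (h₁ : t.1 ≠ some a)
      (h₂ : t.2 ≠ some a) : t.1 ∈ Z ↔ t.2 ∈ Z :=
    (hZ _ _ h₁ h₂).2 (hP p hp t ht (by rintro _ ⟨⟩; exact ⟨h₁, h₂⟩))
  have hlen (p) (hp : p ∈ P) := norm_whitehead_add_countP_le ha (hturn p hp)
  by_cases hcompat : ∀ p ∈ P, ∀ t ∈ turns none p.toWord, (t.1 ∈ Z ↔ t.2 ∈ Z)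
  · obtain ⟨L, hL, hne, hmem⟩ := exists_isRetract_of_turns
      ⟨z, mt (hZ _ _ hza (Option.some_ne_none a).symm).1 hzY⟩
    exact Or.inl ⟨L, hL, hne, fun p hp => hmem p (hcompat p hp)⟩
  · simp only [not_forall] at hcompat
    obtain ⟨p, hp, t, ht, hbad⟩ := hcompat
    obtain ⟨φ, hφ⟩ := exists_mulEquiv_eq_whitehead (iff_of_false ha ha')
    refine Or.inr ⟨φ, fun p hp => hφ p ▸ le_of_add_le_left (hlen p hp), p, hp, ?_⟩
    refine hφ p ▸ (Nat.lt_add_of_pos_right (List.countP_pos_iff.2 ⟨t, ht, ?_⟩)).trans_le (hlen p hp)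
    simpa using hbad

end CutVertex

section Reduced

variable {X : Type*} {A B : List (X × Bool)} {z : X × Bool}

theorem isReduced_append_iff : IsReduced (A ++ B) ↔
    IsReduced A ∧ IsReduced B ∧ ∀ a ∈ B.head?.map letterInv, A.getLast? ≠ some a := by
  rw [FreeGroup.IsReduced, List.isChain_append]
  refine and_congr_right fun _ => and_congr_right fun _ => ?_
  rcases A.getLast? with _ | ⟨x, b⟩
  · simp
  rcases B.head? with _ | ⟨y, c⟩
  · simp
  cases b <;> cases c <;> simp [letterInv]

theorem isReduced_cons_iff : IsReduced (z :: B) ↔ IsReduced B ∧ z ∉ B.head?.map letterInv := by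
  rw [← List.singleton_append, isReduced_append_iff, and_iff_right IsReduced.singleton]
  exact and_congr_right fun _ => ⟨fun h hz => h z hz rfl,
    by rintro h _ ha ⟨⟩; exact h ha⟩

theorem getLast?_invRev (L : List (X × Bool)) : (invRev L).getLast? = L.head?.map letterInv := by
  simp only [invRev, List.getLast?_reverse, List.head?_map]
  rfl

theorem isReduced_invRev (hA : IsReduced A) : IsReduced (invRev A) := by
  classical
  rw [isReduced_iff_reduce_eq] at hA ⊢
  rw [reduce_invRev, hA]

end Reduced

section Jump

variable {X : Type*} {f : FreeGroup X → ℤ} {U : List (X × Bool)} {z : X × Bool}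

theorem exists_ne_cons (hne : ∃ h, f h ≠ f 1) :
    ∃ z U, IsReduced (z :: U) ∧ f (mk (z :: U)) ≠ f (mk U) := by
  classical
  by_contra! hS
  obtain ⟨h, hh⟩ := hne
  suffices key : ∀ L : List (X × Bool), IsReduced L → f (mk L) = f 1 from
    hh (by simpa [mk_toWord] using key h.toWord isReduced_toWord)
  intro L hL
  induction L with
  | nil => rw [one_eq_mk]
  | cons z L ih => rw [hS z L hL, ih (isReduced_cons_iff.1 hL).1]

theorem exists_last_jump [Finite X] (hne : ∃ h, f h ≠ f 1) (hf : IsAlmostInvariant f) :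
    ∃ z U, IsReduced (z :: U) ∧ f (mk (z :: U)) ≠ f (mk U) ∧
      ∀ A y, IsReduced (A ++ y :: U) → f (mk (A ++ y :: U)) = f (mk (y :: U)) := by
  classical
  let S : Set ((X × Bool) × List (X × Bool)) :=
    {s | IsReduced (s.1 :: s.2) ∧ f (mk (s.1 :: s.2)) ≠ f (mk s.2)}
  have hfin : S.Finite := by
    refine (Set.finite_iUnion fun z => (hf (mk [z])).image fun w => (z, w.toWord)).subset ?_
    rintro ⟨z, U⟩ ⟨hred, hjump⟩
    have hU : (mk U).toWord = U := by rw [toWord_mk, (isReduced_cons_iff.1 hred).1.reduce_eq]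
    exact Set.mem_iUnion.2 ⟨z, mk U, by rwa [mk_cons] at hjump, congrArg (Prod.mk z) hU⟩
  obtain ⟨z, U, hzU⟩ := exists_ne_cons hne
  obtain ⟨⟨z, U⟩, ⟨hred, hjump⟩, hmax⟩ :=
    Set.exists_max_image S (fun s => s.2.length) hfin ⟨(z, U), hzU⟩
  refine ⟨z, U, hred, hjump, fun A y hA => ?_⟩
  induction A with
  | nil => rfl
  | cons x A ih =>
    rw [← ih (isReduced_cons_iff.1 hA).1]
    by_contra hne
    have hlen := hmax (x, A ++ y :: U) ⟨hA, hne⟩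
    simp only [List.length_append, List.length_cons] at hlen
    lia

theorem apply_mk_append_eq_of_getLast? (hU : IsReduced U)
    (hjump : ∀ A y, IsReduced (A ++ y :: U) → f (mk (A ++ y :: U)) = f (mk (y :: U)))
    {L : List (X × Bool)} (hL : IsReduced L)
    (hLU : ∀ a ∈ U.head?.map letterInv, L.getLast? ≠ some a) :
    f (mk (L ++ U)) = f (mk (L.getLast?.toList ++ U)) := by
  obtain rfl | ⟨A, y, rfl⟩ := List.eq_nil_or_concat L
  · rfl
  · simp only [List.concat_eq_append, List.append_assoc, List.singleton_append] at hL hLU ⊢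
    rw [hjump A y (by simpa using isReduced_append_iff.2 ⟨hL, hU, hLU⟩)]
    simp

theorem exists_turns_of_isAlmostInvariant [Finite X] [DecidableEq X] (hne : ∃ h, f h ≠ f 1)
    (hf : IsAlmostInvariant f) :
    ∃ (z₀ : Option (X × Bool)) (Y : Set (Option (X × Bool))),
      (∃ z ∉ z₀, ¬ (some z ∈ Y ↔ none ∈ Y)) ∧
      ∀ p : FreeGroup X, (∀ h, f (p * h) = f h) → ∀ t ∈ turns none p.toWord,
        (∀ a ∈ z₀, t.1 ≠ some a ∧ t.2 ≠ some a) → (t.1 ∈ Y ↔ t.2 ∈ Y) := by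
  obtain ⟨z, U, hzU, hz, hjump⟩ := exists_last_jump hne hf
  obtain ⟨hU, hzhead⟩ := isReduced_cons_iff.1 hzU
  refine ⟨U.head?.map letterInv, {o | f (mk (o.toList ++ U)) = f (mk (z :: U))},
    ⟨z, hzhead, fun h => hz (h.1 rfl).symm⟩, fun p hp t ht => ?_⟩
  obtain ⟨A, B, hAB, rfl⟩ := exists_append_of_mem_turns ht
  rw [Option.or_none]
  intro havoid
  obtain ⟨hA, hB, -⟩ := isReduced_append_iff.1 (hAB ▸ isReduced_toWord)
  have hfA := apply_mk_append_eq_of_getLast? hU hjump hA fun a ha => (havoid a ha).1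
  have hfB := apply_mk_append_eq_of_getLast? hU hjump (isReduced_invRev hB) fun a ha => by
    rw [getLast?_invRev]
    exact (havoid a ha).2
  have hpB : p * mk (invRev B ++ U) = mk (A ++ U) := by
    rw [← mk_toWord (x := p), hAB, ← mul_mk, ← mul_mk, ← mul_mk, ← inv_mk, mul_assoc,
      mul_inv_cancel_left]
  rw [getLast?_invRev, ← hp, hpB, hfA] at hfB
  exact iff_of_eq (congrArg (· = _) hfB)

end Jump

section ProperRetract

theorem IsAlmostInvariant.comp_mulEquiv {G H : Type*} [Group G] [Group H] {f : H → ℤ}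
    (hf : IsAlmostInvariant f) (e : G ≃* H) : IsAlmostInvariant (f ∘ e) := fun g => by
  simpa using (hf (e g)).preimage e.injective.injOn

theorem exists_isRetract_of_mulEquiv {G H : Type*} [Group G] [Group H] (e : G ≃* H) {P : Set G}
    (h : ∃ L : Subgroup H, IsRetract L ∧ L ≠ ⊤ ∧ e '' P ⊆ L) :
    ∃ L : Subgroup G, IsRetract L ∧ L ≠ ⊤ ∧ P ⊆ L := by
  obtain ⟨L, hL, hne, hPL⟩ := h
  refine ⟨_, hL.comap_mulEquiv e, fun htop => hne ?_, fun p hp => hPL ⟨p, hp, rfl⟩⟩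
  rw [← Subgroup.comap_top e.toMonoidHom] at htop
  exact Subgroup.comap_injective e.surjective htop

theorem exists_isRetract_of_isAlmostInvariant_freeGroup {X : Type*} [Finite X]
    (P : Finset (FreeGroup X)) {f : FreeGroup X → ℤ} (hne : ∃ h, f h ≠ f 1)
    (hf : IsAlmostInvariant f) (hP : ∀ p ∈ P, ∀ h, f (p * h) = f h) :
    ∃ L : Subgroup (FreeGroup X), IsRetract L ∧ L ≠ ⊤ ∧ (P : Set (FreeGroup X)) ⊆ L := by
  classical
  obtain ⟨φ, -, hφ⟩ := exists_minimalFor_of_wellFoundedLT (fun _ => True)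
    (fun φ : FreeGroup X ≃* FreeGroup X => ∑ p ∈ P, (φ p).norm) ⟨MulEquiv.refl _, trivial⟩
  obtain ⟨h, hh⟩ := hne
  obtain ⟨z₀, Y, hY, hturns⟩ := exists_turns_of_isAlmostInvariant (f := f ∘ φ.symm)
    ⟨φ h, by simpa using hh⟩ (hf.comp_mulEquiv φ.symm)
  obtain hL | ⟨θ, hle, hlt⟩ :=
    exists_isRetract_or_exists_norm_lt (P := φ '' P) hY <| by
      rintro _ ⟨p, hp, rfl⟩
      exact hturns _ fun h => by simp [hP p hp]
  · exact exists_isRetract_of_mulEquiv φ hL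
  · simp only [Set.forall_mem_image, Set.exists_mem_image] at hle hlt
    have hsum : ∑ p ∈ P, (θ (φ p)).norm < ∑ p ∈ P, (φ p).norm :=
      Finset.sum_lt_sum (fun p hp => hle hp) hlt
    exact absurd (hφ (j := φ.trans θ) trivial hsum.le) hsum.not_ge

variable {G : Type*} [Group G] [IsFreeGroup G] [Group.FG G]

theorem exists_isRetract_of_isAlmostInvariant (P : Finset G) {f : G → ℤ}
    (hne : ∃ h, f h ≠ f 1) (hf : IsAlmostInvariant f) (hP : ∀ p ∈ P, ∀ h, f (p * h) = f h) :
    ∃ L : Subgroup G, IsRetract L ∧ L ≠ ⊤ ∧ (P : Set G) ⊆ L := by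
  classical
  let e := IsFreeGroup.toFreeGroup G
  obtain ⟨h, hh⟩ := hne
  refine exists_isRetract_of_mulEquiv e ?_
  rw [← Finset.coe_image]
  exact exists_isRetract_of_isAlmostInvariant_freeGroup (P.image e) (f := f ∘ e.symm)
    ⟨e h, by simpa using hh⟩ (hf.comp_mulEquiv e.symm)
    (by simpa using fun p hp h => hP p hp (e.symm h))

end ProperRetract

/-! ### Equalizers and intersections -/

section Equalizer

variable {H Q : Type*} [Group H] [IsFreeGroup H] [Group Q]

theorem exists_isRetract_le_eqLocus (e : H →* Q) {G : Type*} [Group G] [IsFreeGroup G]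
    [Group.FG G] {α β : G →* H} (he : ∀ g, e (α g) = e (β g))
    (hinj : Function.Injective (e ∘ α)) (P : Finset G) (hP : (P : Set G) ⊆ α.eqLocus β) :
    ∃ L : Subgroup G, IsRetract L ∧ (P : Set G) ⊆ L ∧ L ≤ α.eqLocus β := by
  classical
  induction hn : Group.rank G using Nat.strong_induction_on generalizing G with
  | _ n ih =>
    by_cases hαβ : α = β
    · exact ⟨⊤, isRetract_top, Set.subset_univ _, by simp [hαβ]⟩
    let t := IsFreeGroup.toFreeGroup H
    obtain ⟨f, hfne, hf, hfP⟩ := exists_isAlmostInvariant_of_ne (α := t.toMonoidHom.comp α)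
      (β := t.toMonoidHom.comp β) (e.comp t.symm.toMonoidHom) (by simpa using he)
      (by simpa [Function.comp_def] using hinj)
      (fun h => hαβ (MonoidHom.ext fun g => t.injective (DFunLike.congr_fun h g)))
    obtain ⟨M, hM, hMtop, hPM⟩ := exists_isRetract_of_isAlmostInvariant P hfne hf
      fun p hp => hfP p (congrArg t (hP hp))
    have := hM.fg
    have hrank : Group.rank M < n :=
      (hM.rank_lt hMtop.lt_top).trans_eq ((Group.rank_congr Subgroup.topEquiv).trans hn)
    obtain ⟨E, hE, hPE, hEle⟩ := ih _ hrank (α := α.comp M.subtype) (β := β.comp M.subtype)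
      (fun g => he g) (hinj.comp M.subtype_injective) (P.subtype (· ∈ M))
      (fun p hp => hP (Finset.mem_subtype.1 hp)) rfl
    refine ⟨E.map M.subtype, hM.map_subtype hE, fun p hp => ?_, ?_⟩
    · exact ⟨⟨p, hPM hp⟩, hPE (Finset.mem_subtype.2 hp), rfl⟩
    · rintro _ ⟨g, hg, rfl⟩
      exact hEle hg

theorem isRetract_eqLocus (e : H →* Q) {G : Type*} [Group G] [IsFreeGroup G] [Group.FG G]
    {α β : G →* H} (he : ∀ g, e (α g) = e (β g)) (hinj : Function.Injective (e ∘ α)) :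
    IsRetract (α.eqLocus β) := by
  classical
  obtain ⟨⟨L, hL⟩, hLE, hmax⟩ := exists_maximal_of_wellFoundedGT
    (fun L : {L : Subgroup G // IsRetract L} => L.1 ≤ α.eqLocus β) ⟨⟨⊥, isRetract_bot⟩, bot_le⟩
  suffices h : α.eqLocus β ≤ L from le_antisymm hLE h ▸ hL
  intro p hp
  obtain ⟨S, rfl⟩ := (Group.fg_iff_subgroup_fg L).1 hL.fg
  obtain ⟨M, hM, hPM, hME⟩ := exists_isRetract_le_eqLocus e he hinj (insert p S) <| by
    rw [Finset.coe_insert]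
    exact Set.insert_subset hp ((Subgroup.closure_le _).1 hLE)
  rw [Finset.coe_insert, Set.insert_subset_iff] at hPM
  exact hmax (y := ⟨M, hM⟩) hME ((Subgroup.closure_le _).2 hPM.2) hPM.1

end Equalizer

section Intersection

variable {G : Type*} [Group G] [IsFreeGroup G] [Group.FG G]

theorem IsRetract.inf {R S : Subgroup G} (hR : IsRetract R) (hS : IsRetract S) :
    IsRetract (R ⊓ S) := by
  obtain ⟨r, rfl, hr⟩ := hR
  obtain ⟨s, rfl, hs⟩ := hS
  obtain ⟨ψ, hle, hfix, hinj⟩ := exists_injOn_range_of_fixed_points (r.comp s)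
  have hE : IsRetract (ψ.range.subtype.eqLocus (s.comp ψ.range.subtype)) :=
    isRetract_eqLocus (r.comp s) (fun x => by simp [hs (s x) ⟨_, rfl⟩]) hinj.injective
  have hψ (x) (hx : x ∈ r.range ⊓ s.range) : ψ x = x :=
    hfix x (by rw [MonoidHom.comp_apply, hs x hx.2, hr x hx.1])
  have hmap : (ψ.range.subtype.eqLocus (s.comp ψ.range.subtype)).map ψ.range.subtype =
      r.range ⊓ s.range := by
    ext x
    constructor
    · rintro ⟨⟨x, hx⟩, hxs, rfl⟩
      obtain ⟨y, hy⟩ := hle hx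
      exact ⟨⟨s y, hy⟩, x, hxs.symm⟩
    · exact fun hx => ⟨⟨x, x, hψ x hx⟩, (hs x hx.2).symm, rfl⟩
  exact hmap ▸ hE.map_subtype_range (hmap ▸ hψ)

theorem retract_iInf_general {ι : Type*} (R : ι → Subgroup G) (hR : ∀ i, IsRetract (R i)) :
    IsRetract (⨅ i, R i) := by
  obtain ⟨⟨L, hL⟩, hRL, hmin⟩ := exists_minimal_of_wellFoundedLT
    (fun L : {L : Subgroup G // IsRetract L} => ⨅ i, R i ≤ L.1) ⟨⟨⊤, isRetract_top⟩, le_top⟩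
  suffices h : L ≤ ⨅ i, R i from le_antisymm hRL h ▸ hL
  refine le_iInf fun i => ?_
  have hLR : L ≤ L ⊓ R i := hmin (y := ⟨L ⊓ R i, hL.inf (hR i)⟩) (le_inf hRL (iInf_le R i))
    (inf_le_left : L ⊓ R i ≤ L)
  exact hLR.trans inf_le_right

end Intersection

theorem retract_iInf {n : ℕ} (hn : 2 ≤ n) {ι : Type*}
    (R : ι → Subgroup (FreeGroup (Fin n))) (hR : ∀ i, IsRetract (R i)) :
    IsRetract (⨅ i, R i) :=
  retract_iInf_general R hR
end

section
/- If a subgroup H of F_n is contained in the union of a family of retracts of F_n, then H is contained in one of those retracts. -/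
/-!
Let `r` be a retraction of a free group fixing a commutator `⁅a, b⁆ ≠ 1`, so that
`⁅a, b⁆ = ⁅r a, r b⁆`. Let `G` be generated by `a, b, r a, r b`. Evaluating cup products of classes
in `H¹(G; ℚ)` on both commutators shows that evaluation at the four generators embeds `H¹(G; ℚ)` as
an isotropic subspace of a four-dimensional symplectic space, so `G` has rank at most two. Since
`r a` and `r b` do not commute, `r` is injective on `G` by the Hopf property, and therefore
`r a = a` and `r b = b`.

Free groups are linear over a commutative ring, so by Hilbert's basis theorem the sets
`{i | rᵢ h = h}`, for a family of retractions `rᵢ` and `h` in a finitely generated subgroup, satisfy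
the descending chain condition. If `H` is not abelian, take a minimal such set among the noncentral
`h ∈ H`. If `g ∈ H` does not commute with `h`, then every `rᵢ` fixing `⁅h, g⁆` fixes `h` and `g`, so
by minimality every `rᵢ` fixing `h` fixes `⁅h, g⁆`, hence `g`. Such elements `g` generate `H`. If
`H` is abelian, it is cyclic and a generator plays the role of `h`. In both cases a retract
containing `h` contains `H`.
-/

section PingPong

open Polynomial

universe u

variable {R V : Type*} [CommRing R]

theorem transvection_zpow_apply [AddCommGroup V] [Module R V] {f : Module.Dual R V} {v : V}
    (h : f v = 0) (k : ℤ) (w : V) :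
    (LinearEquiv.transvection h ^ k) w = w + k • f w • v := by
  have hneg : f (-v) = 0 := by rw [map_neg, h, neg_zero]
  induction k generalizing w with
  | zero => simp
  | succ k ih =>
    rw [zpow_add_one, LinearEquiv.mul_apply, ih]
    simp only [LinearEquiv.transvection.apply, map_add, map_smul, h, smul_zero, add_zero]
    module
  | pred k ih =>
    rw [zpow_sub_one, LinearEquiv.mul_apply, LinearEquiv.transvection.inv_eq h hneg, ih]
    simp only [LinearEquiv.transvection.apply, map_add, map_smul, map_neg, h, smul_neg, smul_zero,
      neg_zero, add_zero]
    module

/-- The linear form on `R[X]²` whose kernel is the line of slope `c`. With the vector `(X, cX)` on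
that line it defines the transvections that generate a free group. -/
noncomputable def slopeForm (c : R) : Module.Dual R[X] (Fin 2 → R[X]) :=
  LinearMap.proj 1 - C c • LinearMap.proj 0

theorem slopeForm_apply (c : R) (v : Fin 2 → R[X]) : slopeForm c v = v 1 - C c * v 0 := by
  simp [slopeForm]

theorem slopeForm_smul_slope (c : R) : slopeForm c ![X, C c * X] = 0 := by
  simp [slopeForm_apply]

/-- The ping-pong table around the line of slope `c` in `R[X]²`, for the degree valuation: the
vectors that are closer to that line than they are large. -/
def nearSlope (c : R) : Set (Fin 2 → R[X]) :=
  {v | (slopeForm c v).degree < (v 0).degree}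

variable [IsDomain R] {c d : R}

theorem degree_slopeForm_of_mem_nearSlope (h : c ≠ d) {v : Fin 2 → R[X]}
    (hv : v ∈ nearSlope d) : (slopeForm c v).degree = (v 0).degree := by
  have hsub : slopeForm c v = slopeForm d v + C (d - c) * v 0 := by
    simp only [slopeForm_apply, C_sub]
    ring
  have hmul : (C (d - c) * v 0).degree = (v 0).degree := by
    rw [degree_mul, degree_C (sub_ne_zero.2 h.symm), zero_add]
  rw [hsub, degree_add_eq_right_of_degree_lt (hmul ▸ hv), hmul]

theorem disjoint_nearSlope (h : c ≠ d) : Disjoint (nearSlope c) (nearSlope d) :=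
  Set.disjoint_left.2 fun _ hc hd => hc.ne (degree_slopeForm_of_mem_nearSlope h hd)

theorem transvection_zpow_mem_nearSlope [CharZero R] (h : c ≠ d) {k : ℤ} (hk : k ≠ 0)
    {v : Fin 2 → R[X]} (hv : v ∈ nearSlope d) :
    (LinearEquiv.transvection (slopeForm_smul_slope c) ^ k) v ∈ nearSlope c := by
  have hdeg := degree_slopeForm_of_mem_nearSlope h hv
  have hne : slopeForm c v ≠ 0 := by
    rw [← degree_ne_bot, hdeg]
    exact (bot_le.trans_lt hv).ne'
  have hlt : (v 0).degree < (k • (slopeForm c v * X)).degree := by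
    rw [zsmul_eq_mul, ← C_eq_intCast, degree_C_mul (Int.cast_ne_zero.2 hk), ← hdeg]
    exact degree_lt_degree_mul_X hne
  rw [transvection_zpow_apply, nearSlope, Set.mem_ofPred_eq, map_add, map_zsmul, map_smul,
    slopeForm_smul_slope, smul_zero, smul_zero, add_zero, hdeg]
  exact hlt.trans_eq (degree_add_eq_right_of_degree_lt hlt).symm

theorem lift_transvection_injective [CharZero R] {α : Type*} [Nontrivial α] {x : α → R}
    (hx : Function.Injective x) :
    Function.Injective (FreeGroup.lift fun i => LinearEquiv.transvection
      (slopeForm_smul_slope (x i))) := by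
  have hfactor : (FreeGroup.lift fun i => LinearEquiv.transvection (slopeForm_smul_slope (x i))) =
      (Monoid.CoprodI.lift fun i => FreeGroup.lift fun _ : Unit =>
        LinearEquiv.transvection (slopeForm_smul_slope (x i))).comp
          (freeGroupEquivCoprodI (ι := α)).toMonoidHom := by
    ext1 i
    simp
  rw [hfactor, MonoidHom.coe_comp]
  refine Function.Injective.comp ?_ (MulEquiv.injective freeGroupEquivCoprodI)
  refine Monoid.CoprodI.lift_injective_of_ping_pong _ ?_ (fun i => nearSlope (x i)) ?_ ?_ ?_
  · inhabit α
    refine Or.inr ⟨default, ?_⟩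
    rw [FreeGroup.freeGroupUnitEquivInt.cardinal_eq, Cardinal.mk_denumerable]
    exact Cardinal.natCast_le_aleph0
  · exact fun i => ⟨![X, C (x i) * X], by simp [nearSlope, slopeForm_smul_slope]⟩
  · exact fun i j h => disjoint_nearSlope (hx.ne h)
  · intro i j hij
    refine FreeGroup.freeGroupUnitEquivInt.forall_congr_left.mpr fun k hk => ?_
    have hk₀ : k ≠ 0 := by
      rintro rfl
      exact hk (by simp [FreeGroup.freeGroupUnitEquivInt])
    rintro _ ⟨v, hv, rfl⟩
    change FreeGroup.lift (fun _ => _) (FreeGroup.of () ^ k) • v ∈ _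
    rw [map_zpow, FreeGroup.lift_apply_of]
    exact transvection_zpow_mem_nearSlope (hx.ne hij) hk₀ hv

theorem exists_injective_monoidHom_matrix (F : Type u) [Group F] [IsFreeGroup F] :
    ∃ (S : Type u) (_ : CommRing S) (ρ : F →* Matrix (Fin 2) (Fin 2) S), Function.Injective ρ := by
  let α := IsFreeGroup.Generators F ⊕ Fin 2
  have : Nontrivial α := Sum.inr_injective.nontrivial
  let T : FreeGroup α →* _ := FreeGroup.lift fun i => LinearEquiv.transvection
    (slopeForm_smul_slope (MvPolynomial.X i : MvPolynomial α ℤ))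
  have hT : Function.Injective T := lift_transvection_injective MvPolynomial.X_injective
  let E := IsFreeGroup.toFreeGroup F
  let M := LinearMap.toMatrixAlgEquiv' (R := (MvPolynomial α ℤ)[X]) (n := Fin 2)
  refine ⟨_, inferInstance, M.toMulEquiv.toMonoidHom.comp
    (LinearEquiv.automorphismGroup.toLinearMapMonoidHom.comp
      (T.comp ((FreeGroup.map Sum.inl).comp E.toMonoidHom))), ?_⟩
  exact M.injective.comp (LinearEquiv.toLinearMap_injective.comp
    (hT.comp ((FreeGroup.map_injective Sum.inl_injective).comp E.injective)))

end PingPong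

section EquationalNoetherianity

variable {I G : Type*} [Monoid G]

theorem exists_isNoetherianRing_forall_coeff_mem [Monoid.FG G] {J κ S : Type*} [Finite J]
    [Fintype κ] [DecidableEq κ] [CommRing S] (ρ : J → I → G →* Matrix κ κ S) :
    ∃ A : Subring (I → S), IsNoetherianRing A ∧ ∀ j g a b, (fun i => ρ j i g a b) ∈ A := by
  obtain ⟨T, hT, hTfin⟩ := Monoid.fg_iff.1 ‹Monoid.FG G›
  let coeff (p : G × J × κ × κ) : I → S := fun i => ρ p.2.1 i p.1 p.2.2.1 p.2.2.2
  refine ⟨Subring.closure (coeff '' (T ×ˢ Set.univ)),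
    is_noetherian_subring_closure _ ((hTfin.prod Set.finite_univ).image _), fun j g => ?_⟩
  have hg : g ∈ Submonoid.closure T := hT ▸ Submonoid.mem_top g
  induction hg using Submonoid.closure_induction with
  | mem g hg => exact fun a b => Subring.subset_closure ⟨(g, j, a, b), ⟨hg, trivial⟩, rfl⟩
  | one =>
    intro a b
    simp only [map_one, Matrix.one_apply]
    split_ifs
    exacts [one_mem _, zero_mem _]
  | mul g h _ _ hg hh =>
    intro a b
    have hmul : (fun i => ρ j i (g * h) a b) =
        ∑ k, (fun i => ρ j i g a k) * fun i => ρ j i h k b := by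
      ext i
      simp [Matrix.mul_apply]
    rw [hmul]
    exact sum_mem fun k _ => mul_mem (hg a k) (hh k b)

variable {M : Type*} [Monoid M]

/-- The indices at which two families of homomorphisms agree on `g`. With `g` regarded as an
equation in the index, this is its solution set. -/
def agreementSet (r s : I → G →* M) (g : G) : Set I :=
  {i | r i g = s i g}

theorem mem_agreementSet {r s : I → G →* M} {g : G} {i : I} :
    i ∈ agreementSet r s g ↔ r i g = s i g :=
  Iff.rfl

/-- The ideal of those functions in a function ring that vanish on a set of points. It turns a
descending chain of solution sets into an ascending chain of ideals. -/
def vanishingIdealOn {S : Type*} [CommRing S] (A : Subring (I → S)) (Z : Set I) : Ideal A where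
  carrier := {f | ∀ i ∈ Z, f.1 i = 0}
  zero_mem' := fun _ _ => rfl
  add_mem' := fun hf hg i hi => by simp [hf i hi, hg i hi]
  smul_mem' := fun c f hf i hi => by simp [hf i hi]

theorem wellFounded_agreementSet_matrix [Monoid.FG G] {κ S : Type*} [Fintype κ] [DecidableEq κ]
    [CommRing S] (r s : I → G →* Matrix κ κ S) :
    WellFounded fun g h => agreementSet r s g ⊂ agreementSet r s h := by
  obtain ⟨A, hA, hmem⟩ := exists_isNoetherianRing_forall_coeff_mem ![r, s]
  let J (g : G) : Ideal A := vanishingIdealOn A (agreementSet r s g)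
  refine Subrelation.wf (r := InvImage (· > ·) J) ?_ (InvImage.wf J wellFounded_gt)
  intro g h hgh
  refine lt_of_le_not_ge (fun f hf i hi => hf i (hgh.1 hi)) fun hJ => hgh.2 fun i hi => ?_
  refine Matrix.ext fun a b => sub_eq_zero.1 ?_
  let f : A := ⟨_, sub_mem (hmem 0 g a b) (hmem 1 g a b)⟩
  have hf : f ∈ J g := fun j hj => sub_eq_zero.2 (congrFun₂ hj a b)
  exact hJ hf i hi

theorem wellFounded_agreementSet [Monoid.FG G] {F : Type*} [Group F] [IsFreeGroup F]
    (r s : I → G →* F) : WellFounded fun g h => agreementSet r s g ⊂ agreementSet r s h := by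
  obtain ⟨S, _, ρ, hρ⟩ := exists_injective_monoidHom_matrix F
  have hset (g : G) : agreementSet (fun i => ρ.comp (r i)) (fun i => ρ.comp (s i)) g =
      agreementSet r s g := Set.ext fun i => hρ.eq_iff
  simpa only [hset] using
    wellFounded_agreementSet_matrix (fun i => ρ.comp (r i)) (fun i => ρ.comp (s i))

theorem injective_of_surjective_of_isFreeGroup {G : Type*} [Group G] [Group.FG G]
    [IsFreeGroup G] {φ : Monoid.End G} (hφ : Function.Surjective φ) : Function.Injective φ := by
  refine (injective_iff_map_eq_one φ).2 fun a ha => by_contra fun hne => ?_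
  choose g hg using fun n : ℕ => hφ.iterate n a
  let r (n : ℕ) : G →* G := φ ^ n
  have hr (n : ℕ) (x : G) : r n x = φ^[n] x := congrFun (Monoid.End.coe_pow G φ n) x
  have hset (n : ℕ) : agreementSet r 1 (g n) = Set.Ioi n := by
    ext m
    rw [mem_agreementSet, hr, Pi.one_apply, MonoidHom.one_apply, Set.mem_Ioi]
    refine ⟨fun h => ?_, fun h => ?_⟩
    · by_contra! hmn
      refine hne ?_
      rw [← hg n, ← Nat.sub_add_cancel hmn, Function.iterate_add_apply,
        Nat.sub_add_cancel hmn, h, iterate_map_one]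
    · rw [← Nat.sub_add_cancel h, Function.iterate_add_apply, Function.iterate_succ_apply', hg,
        ha, iterate_map_one]
  have := IsWellFounded.mk (wellFounded_agreementSet r 1)
  obtain ⟨n, hn⟩ := WellFounded.not_rel_apply_succ
    (r := fun x y => agreementSet r 1 x ⊂ agreementSet r 1 y) g
  refine hn ?_
  rw [hset, hset]
  exact Set.Ioi_ssubset_Ioi (Nat.lt_succ_self n)

end EquationalNoetherianity

section CommutatorRank

open Module Multiplicative
open scoped commutatorElement

variable {G K : Type*} [Group G]

/-- The central extension of `G` by `K` with cocycle `(v, w) ↦ f v * g w`, the cup product of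
`f` and `g`. -/
@[ext]
structure CupExtension [CommRing K] (f g : G →* Multiplicative K) where
  fiber : K
  base : G

namespace CupExtension

variable [CommRing K] {f g : G →* Multiplicative K}

instance : Mul (CupExtension f g) :=
  ⟨fun x y => ⟨x.fiber + y.fiber + toAdd (f x.base) * toAdd (g y.base), x.base * y.base⟩⟩

instance : One (CupExtension f g) := ⟨⟨0, 1⟩⟩

instance : Inv (CupExtension f g) :=
  ⟨fun x => ⟨toAdd (f x.base) * toAdd (g x.base) - x.fiber, x.base⁻¹⟩⟩

theorem mul_def (x y : CupExtension f g) :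
    x * y = ⟨x.fiber + y.fiber + toAdd (f x.base) * toAdd (g y.base), x.base * y.base⟩ :=
  rfl

theorem one_def : (1 : CupExtension f g) = ⟨0, 1⟩ :=
  rfl

theorem inv_def (x : CupExtension f g) :
    x⁻¹ = ⟨toAdd (f x.base) * toAdd (g x.base) - x.fiber, x.base⁻¹⟩ :=
  rfl

instance : Group (CupExtension f g) :=
  Group.ofLeftAxioms
    (fun x y z => by
      ext
      · simp only [mul_def, map_mul, toAdd_mul]
        ring
      · exact mul_assoc _ _ _)
    (fun x => by ext <;> simp [mul_def, one_def])
    (fun x => by ext <;> simp [mul_def, one_def, inv_def])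

/-- The projection of the extension onto its base. Over a free group it splits, which makes the
cocycle a coboundary. -/
def proj (f g : G →* Multiplicative K) : CupExtension f g →* G where
  toFun := base
  map_one' := rfl
  map_mul' _ _ := rfl

end CupExtension

theorem exists_map_mul_eq_add_mul [IsFreeGroup G] [CommRing K] (f g : G →* Multiplicative K) :
    ∃ q : G → K, ∀ v w, q (v * w) = q v + q w + toAdd (f v) * toAdd (g w) := by
  let σ : G →* CupExtension f g := IsFreeGroup.lift fun x => ⟨0, IsFreeGroup.of x⟩
  have hσ : (CupExtension.proj f g).comp σ = MonoidHom.id G :=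
    IsFreeGroup.ext_hom fun x => by simp [σ, IsFreeGroup.lift_of, CupExtension.proj]
  refine ⟨fun w => (σ w).fiber, fun v w => ?_⟩
  have hbase (u : G) : (σ u).base = u := DFunLike.congr_fun hσ u
  simp only [map_mul, CupExtension.mul_def, hbase]

theorem commutator_pairing_congr [IsFreeGroup G] [CommRing K] (f g : G →* Multiplicative K)
    {a b c d : G} (h : ⁅a, b⁆ = ⁅c, d⁆) :
    toAdd (f a) * toAdd (g b) - toAdd (f b) * toAdd (g a) =
      toAdd (f c) * toAdd (g d) - toAdd (f d) * toAdd (g c) := by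
  obtain ⟨q, hq⟩ := exists_map_mul_eq_add_mul f g
  have hcomm (x y : G) :
      q ⁅x, y⁆ = toAdd (f x) * toAdd (g y) - toAdd (f y) * toAdd (g x) := by
    have hf : f ⁅x, y⁆ = 1 := by
      rw [map_commutatorElement, commutatorElement_eq_one_iff_mul_comm, mul_comm]
    have hxy : q (x * y) = q ⁅x, y⁆ + q (y * x) := by
      rw [show x * y = ⁅x, y⁆ * (y * x) by simp [commutatorElement_def], hq, hf, toAdd_one,
        zero_mul, add_zero]
    rw [hq, hq] at hxy
    linear_combination -hxy
  rw [← hcomm, h, hcomm]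

theorem two_mul_finrank_le_of_isotropic {V : Type*} [Field K] [AddCommGroup V] [Module K V]
    [FiniteDimensional K V] {B : LinearMap.BilinForm K V} (hB : B.Nondegenerate)
    {W : Submodule K V} (hW : ∀ u ∈ W, ∀ v ∈ W, B u v = 0) : 2 * finrank K W ≤ finrank K V := by
  have hle : W ≤ B.orthogonal W := fun v hv u hu => hW u hu v hv
  have := Submodule.finrank_mono hle
  rw [LinearMap.BilinForm.finrank_orthogonal hB] at this
  have := Submodule.finrank_le W
  omega

theorem finrank_le_two_of_commutator_pairing [Field K] {V : Type*} [AddCommGroup V] [Module K V]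
    (α β γ δ : Dual K V) (hzero : ∀ v, α v = 0 → β v = 0 → γ v = 0 → δ v = 0 → v = 0)
    (hpair : ∀ u v, α u * β v - β u * α v = γ u * δ v - δ u * γ v) :
    Module.Finite K V ∧ finrank K V ≤ 2 := by
  let Φ : V →ₗ[K] Fin 4 → K := LinearMap.pi ![α, β, γ, δ]
  have hΦ : Function.Injective Φ := by
    refine (injective_iff_map_eq_zero Φ).2 fun v hv => ?_
    exact hzero v (congrFun hv 0) (congrFun hv 1) (congrFun hv 2) (congrFun hv 3)
  let A : Matrix (Fin 4) (Fin 4) K := !![0, 1, 0, 0; -1, 0, 0, 0; 0, 0, 0, -1; 0, 0, 1, 0]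
  have hA : A.toBilin'.Nondegenerate := by
    refine LinearMap.BilinForm.nondegenerate_toBilin'_of_det_ne_zero' A ?_
    simp [A, Matrix.det_succ_row_zero, Fin.sum_univ_succ, Fin.succAbove]
  have hiso : ∀ u ∈ LinearMap.range Φ, ∀ v ∈ LinearMap.range Φ, A.toBilin' u v = 0 := by
    rintro _ ⟨u, rfl⟩ _ ⟨v, rfl⟩
    have hΦuv : A.toBilin' (Φ u) (Φ v) =
        α u * β v - β u * α v - (γ u * δ v - δ u * γ v) := by
      simp only [Matrix.toBilin'_apply, Fin.sum_univ_four, A, Φ, LinearMap.pi_apply,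
        Matrix.of_apply, Matrix.cons_val]
      ring
    rw [hΦuv, hpair, sub_self]
  have := two_mul_finrank_le_of_isotropic hA hiso
  rw [LinearMap.finrank_range_of_inj hΦ, finrank_fin_fun] at this
  exact ⟨.of_injective Φ hΦ, by omega⟩

theorem nonempty_generators_embedding_of_commutator_eq [IsFreeGroup G] {a b c d : G}
    (h : ⁅a, b⁆ = ⁅c, d⁆) (htop : Subgroup.closure {a, b, c, d} = ⊤) :
    Nonempty (IsFreeGroup.Generators G ↪ Fin 2) := by
  let X := IsFreeGroup.Generators G
  let e : G →* Multiplicative (Dual ℚ (X →₀ ℚ)) :=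
    IsFreeGroup.lift fun x => ofAdd (Finsupp.lapply x)
  let coord (v : X →₀ ℚ) : G →* Multiplicative ℚ :=
    (LinearMap.applyₗ v).toAddMonoidHom.toMultiplicative.comp e
  have hzero (v : X →₀ ℚ) (ha : toAdd (e a) v = 0) (hb : toAdd (e b) v = 0)
      (hc : toAdd (e c) v = 0) (hd : toAdd (e d) v = 0) : v = 0 := by
    have hcoord : coord v = 1 := by
      refine MonoidHom.eq_of_eqOn_dense htop ?_
      rintro _ (rfl | rfl | rfl | rfl) <;> assumption
    ext x
    have hx := DFunLike.congr_fun hcoord (IsFreeGroup.of x)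
    simpa [coord, e, IsFreeGroup.lift_of] using hx
  obtain ⟨hfin, hrank⟩ := finrank_le_two_of_commutator_pairing (toAdd (e a)) (toAdd (e b))
    (toAdd (e c)) (toAdd (e d)) hzero fun u v => commutator_pairing_congr (coord u) (coord v) h
  have : Finite X := (finite_finsupp_self_iff.1 hfin).resolve_left (not_subsingleton ℚ)
  have := Fintype.ofFinite X
  rw [finrank_finsupp_self] at hrank
  exact Function.Embedding.nonempty_of_card_le (by rwa [Fintype.card_fin])

theorem exists_lift_surjective [IsFreeGroup G] {Y : Type*} (j : IsFreeGroup.Generators G ↪ Y) :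
    ∃ p : Y → G, Function.Surjective (FreeGroup.lift p) := by
  let p : Y → G := Function.extend j IsFreeGroup.of 1
  let σ : G →* FreeGroup Y := IsFreeGroup.lift fun x => FreeGroup.of (j x)
  have hσ : (FreeGroup.lift p).comp σ = MonoidHom.id G :=
    IsFreeGroup.ext_hom fun x => by simp [σ, p, IsFreeGroup.lift_of, j.injective.extend_apply]
  exact ⟨p, fun g => ⟨σ g, DFunLike.congr_fun hσ g⟩⟩

end CommutatorRank

section Commuting

open scoped commutatorElement

variable {F : Type*} [Group F] [IsFreeGroup F]

variable (F) in
theorem isCyclic_of_subsingleton_generators [Subsingleton (IsFreeGroup.Generators F)] :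
    IsCyclic F := by
  have : IsCyclic (FreeGroup (IsFreeGroup.Generators F)) := by
    cases isEmpty_or_nonempty (IsFreeGroup.Generators F)
    · infer_instance
    · have := uniqueOfSubsingleton (Classical.arbitrary (IsFreeGroup.Generators F))
      infer_instance
  exact isCyclic_of_surjective (IsFreeGroup.toFreeGroup F).symm
    (IsFreeGroup.toFreeGroup F).symm.surjective

theorem not_commute_of_of {α : Type*} {x y : α} (h : x ≠ y) :
    ¬ Commute (FreeGroup.of x) (FreeGroup.of y) := by
  classical
  intro hc
  let φ : FreeGroup α →* Equiv.Perm (Fin 3) :=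
    FreeGroup.lift fun z => if z = x then Equiv.swap 0 1 else Equiv.swap 1 2
  have hφ := hc.map φ
  simp only [φ, FreeGroup.lift_apply_of, if_pos, if_neg h.symm] at hφ
  exact absurd hφ.eq (by decide)

theorem isCyclic_of_isMulCommutative_of_isFreeGroup [IsMulCommutative F] : IsCyclic F := by
  have : Subsingleton (IsFreeGroup.Generators F) := by
    refine ⟨fun x y => by_contra fun hxy => not_commute_of_of hxy ?_⟩
    refine (IsFreeGroup.toFreeGroup F).symm.injective ?_
    rw [map_mul, map_mul, mul_comm']
  exact isCyclic_of_subsingleton_generators F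

theorem exists_surjective_freeGroup_fin_two {x y : F} (h : ¬ Commute x y) :
    ∃ φ : F →* FreeGroup (Fin 2), Function.Surjective φ := by
  have : Nontrivial (IsFreeGroup.Generators F) := by
    by_contra!
    have := isCyclic_of_subsingleton_generators F
    exact h (IsCyclic.isMulCommutative.is_comm.comm x y)
  obtain ⟨u, v, huv⟩ := exists_pair_ne (IsFreeGroup.Generators F)
  have hinj : Function.Injective ![u, v] := injective_pair_iff_ne.2 huv
  exact ⟨(FreeGroup.map (Function.invFun ![u, v])).comp (IsFreeGroup.toFreeGroup F).toMonoidHom,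
    (FreeGroup.map_surjective (Function.invFun_surjective hinj)).comp
      (IsFreeGroup.toFreeGroup F).surjective⟩

theorem lift_injective_of_not_commute {p : Fin 2 → F} (h : ¬ Commute (p 0) (p 1)) :
    Function.Injective (FreeGroup.lift p) := by
  let ψ := (FreeGroup.lift p).rangeRestrict
  have hne : ¬ Commute (ψ (FreeGroup.of 0)) (ψ (FreeGroup.of 1)) := fun hc => h <| by
    simpa [ψ] using hc.map (FreeGroup.lift p).range.subtype
  obtain ⟨φ, hφ⟩ := exists_surjective_freeGroup_fin_two hne
  have hinj : Function.Injective (φ.comp ψ) := injective_of_surjective_of_isFreeGroup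
    (hφ.comp (FreeGroup.lift p).rangeRestrict_surjective)
  exact MonoidHom.rangeRestrict_injective_iff.1 (Function.Injective.of_comp hinj)

theorem not_commute_commutatorElement {x y : F} (h : ¬ Commute x y) : ¬ Commute ⁅x, y⁆ x := by
  let a : FreeGroup (Fin 2) := FreeGroup.of 0
  let b : FreeGroup (Fin 2) := FreeGroup.of 1
  have hfree : ¬ ⁅a, b⁆ * a = a * ⁅a, b⁆ := by decide
  refine fun hc => hfree (lift_injective_of_not_commute (p := ![x, y]) h ?_)
  simpa [a, b, map_commutatorElement] using hc.eq

theorem commute_lift {M : Type*} [Group M] {p : Fin 2 → M} (h : Commute (p 0) (p 1))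
    (v w : FreeGroup (Fin 2)) : Commute (FreeGroup.lift p v) (FreeGroup.lift p w) := by
  have : IsMulCommutative (FreeGroup.lift p).range := by
    rw [FreeGroup.range_lift_eq_closure]
    refine Subgroup.isMulCommutative_closure ?_
    simp only [Set.forall_mem_range, Fin.forall_fin_two]
    exact ⟨⟨trivial, h⟩, h.symm, trivial⟩
  exact congrArg Subtype.val
    (mul_comm' ((FreeGroup.lift p).rangeRestrict v) ((FreeGroup.lift p).rangeRestrict w))

theorem injective_of_lift_surjective {G : Type*} [Group G] {p : Fin 2 → G}
    (hp : Function.Surjective (FreeGroup.lift p)) (φ : G →* F) {x y : G}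
    (h : ¬ Commute (φ x) (φ y)) : Function.Injective φ := by
  have hcomp : φ.comp (FreeGroup.lift p) = FreeGroup.lift (φ ∘ p) := by
    ext i
    simp
  have hne : ¬ Commute ((φ ∘ p) 0) ((φ ∘ p) 1) := fun hc => by
    obtain ⟨⟨v, rfl⟩, ⟨w, rfl⟩⟩ := And.intro (hp x) (hp y)
    rw [← MonoidHom.comp_apply, ← MonoidHom.comp_apply, hcomp] at h
    exact h (commute_lift hc v w)
  have hinj : Function.Injective (φ.comp (FreeGroup.lift p)) :=
    hcomp ▸ lift_injective_of_not_commute hne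
  exact Function.Injective.of_comp_right hinj hp

theorem map_eq_self_of_map_commutatorElement_eq {r : F →* F} (hr : ∀ x, r (r x) = r x) {a b : F}
    (hab : ¬ Commute a b) (h : r ⁅a, b⁆ = ⁅a, b⁆) : r a = a ∧ r b = b := by
  let s : Set F := {a, b, r a, r b}
  have hs {x : F} (hx : x ∈ s) : x ∈ Subgroup.closure s := Subgroup.subset_closure hx
  let a' : Subgroup.closure s := ⟨a, hs (by simp [s])⟩
  let b' : Subgroup.closure s := ⟨b, hs (by simp [s])⟩
  let c' : Subgroup.closure s := ⟨r a, hs (by simp [s])⟩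
  let d' : Subgroup.closure s := ⟨r b, hs (by simp [s])⟩
  have hcomm : ⁅a', b'⁆ = ⁅c', d'⁆ := Subtype.ext (h.symm.trans (map_commutatorElement r a b))
  have htop : Subgroup.closure {a', b', c', d'} = ⊤ := by
    convert Subgroup.closure_closure_coe_preimage (k := s)
    ext x
    simp [s, a', b', c', d', Subtype.ext_iff]
  obtain ⟨j⟩ := nonempty_generators_embedding_of_commutator_eq hcomm htop
  obtain ⟨p, hp⟩ := exists_lift_surjective j
  have hne : ¬ Commute (r a) (r b) := fun hc => hab <| by
    rw [← commutatorElement_eq_one_iff_commute, ← h, map_commutatorElement]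
    exact commutatorElement_eq_one_iff_commute.2 hc
  have hinj : Function.Injective (r.comp (Subgroup.closure s).subtype) :=
    injective_of_lift_surjective hp _ (x := a') (y := b') hne
  exact ⟨congrArg Subtype.val (@hinj c' a' (hr a)), congrArg Subtype.val (@hinj d' b' (hr b))⟩

end Commuting

section FixedPoints

open scoped commutatorElement

variable {F : Type*} [Group F] [IsFreeGroup F]

theorem exists_mem_forall_fixed_imp_forall_fixed {I : Type*} {r : I → F →* F}
    (hr : ∀ i x, r i (r i x) = r i x) {H K : Subgroup F} (hHK : H ≤ K) (hK : K.FG) {a b : F}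
    (ha : a ∈ H) (hb : b ∈ H) (hab : ¬ Commute a b) :
    ∃ h ∈ H, ∀ i, r i h = h → ∀ g ∈ H, r i g = g := by
  have := (Group.fg_iff_subgroup_fg K).2 hK
  obtain ⟨⟨h, _⟩, ⟨hh, g₀, hg₀, hhg₀⟩, hmin⟩ :=
    (wellFounded_agreementSet (fun i => (r i).comp K.subtype) fun _ => K.subtype).has_min
      {x | (x : F) ∈ H ∧ ∃ g ∈ H, ¬ Commute (x : F) g} ⟨⟨a, hHK ha⟩, ha, b, hb, hab⟩
  have hfix {g : F} (hg : g ∈ H) (hhg : ¬ Commute h g) {i : I} (hi : r i h = h) : r i g = g := by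
    have hw : ⁅h, g⁆ ∈ H := mul_mem (mul_mem (mul_mem hh hg) (inv_mem hh)) (inv_mem hg)
    have hsplit (j : I) (hj : r j ⁅h, g⁆ = ⁅h, g⁆) : r j h = h ∧ r j g = g :=
      map_eq_self_of_map_commutatorElement_eq (hr j) hhg hj
    by_contra hig
    exact hmin ⟨⁅h, g⁆, hHK hw⟩ ⟨hw, h, hh, not_commute_commutatorElement hhg⟩
      (Set.ssubset_iff_exists.2
        ⟨fun j hj => (hsplit j hj).1, i, hi, fun hwi => hig (hsplit i hwi).2⟩)
  refine ⟨h, hh, fun i hi g hg => ?_⟩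
  by_cases hhg : Commute h g
  · have hmul : ¬ Commute h (g * g₀) := fun hc => hhg₀ (by
      simpa using hhg.inv_right.mul_right hc)
    have hfixed := hfix (mul_mem hg hg₀) hmul hi
    rw [map_mul, hfix hg₀ hhg₀ hi] at hfixed
    exact mul_right_cancel hfixed
  · exact hfix hg hhg hi

theorem le_retract_of_subset_iUnion_general {ι : Type*}
    (R : ι → Subgroup F) (hR : ∀ i, IsRetract (R i)) {H K : Subgroup F} (hHK : H ≤ K) (hK : K.FG)
    (hcover : (H : Set F) ⊆ ⋃ i, (R i : Set F)) : ∃ i, H ≤ R i := by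
  choose r hrange hfix using hR
  have hmem {i : ι} {x : F} : r i x = x ↔ x ∈ R i :=
    ⟨fun h => hrange i ▸ ⟨x, h⟩, hfix i x⟩
  suffices ∃ h ∈ H, ∀ i, h ∈ R i → H ≤ R i by
    obtain ⟨h, hh, hle⟩ := this
    obtain ⟨i, hi⟩ := Set.mem_iUnion.1 (hcover hh)
    exact ⟨i, hle i hi⟩
  by_cases hcomm : ∀ a ∈ H, ∀ b ∈ H, Commute a b
  · have : IsMulCommutative H := ⟨⟨fun a b => Subtype.ext (hcomm a a.2 b b.2)⟩⟩
    obtain ⟨h, hh⟩ := (isCyclic_of_isMulCommutative_of_isFreeGroup (F := H)).exists_generator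
    refine ⟨h, h.2, fun i hi g hg => ?_⟩
    obtain ⟨k, hk⟩ := hh ⟨g, hg⟩
    have hpow : (h : F) ^ k = g := congrArg Subtype.val hk
    exact hpow ▸ zpow_mem hi k
  · push Not at hcomm
    obtain ⟨a, ha, b, hb, hab⟩ := hcomm
    have hidem (i : ι) (x : F) : r i (r i x) = r i x := hfix i _ (hrange i ▸ ⟨x, rfl⟩)
    obtain ⟨h, hh, hall⟩ := exists_mem_forall_fixed_imp_forall_fixed hidem hHK hK ha hb hab
    exact ⟨h, hh, fun i hi g hg => hmem.1 (hall i (hmem.2 hi) g hg)⟩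

end FixedPoints

theorem le_retract_of_subset_iUnion {n : ℕ} (hn : 2 ≤ n) {ι : Type*}
    (R : ι → Subgroup (FreeGroup (Fin n))) (hR : ∀ i, IsRetract (R i))
    (H : Subgroup (FreeGroup (Fin n)))
    (hcover : (H : Set (FreeGroup (Fin n))) ⊆ ⋃ i, (R i : Set (FreeGroup (Fin n)))) :
    ∃ i, H ≤ R i :=
  le_retract_of_subset_iUnion_general R hR le_top (Group.fg_def.1 inferInstance) hcover
end

section
/- For every n ≥ 2, every m ≥ 3 and every 1 ≤ k ≤ n−1, there exist a subgroup H of F_n of rank m and a retract R of F_n of rank k such that H ∩ R is not a retract of H. -/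
/-!
Let `a` and `b` be two basis elements of a free group and `r = b⁻¹a⁻¹b²a`. With `z = b⁻¹a⁻¹bab` one
has `r² = z²⁅b⁻², a⁻¹⁆`, so `r²` is the square of `z` modulo commutators in every subgroup `H`
containing `a`, `b²` and `z`. If `H ∩ R` consists of powers of `r` and contains `r²`, then a
retraction `ρ` of `H` onto `H ∩ R` kills commutators and fixes `r²`, whence `ρ(z)² = r²`. Roots in
free groups are unique, so `r = ρ(z)` lies in `H`.

It remains to see that `r ∉ H` and that `a`, `b²`, `z` belong to an infinite free family, from which
`H` of any rank at least 3 is obtained by selecting finitely many members. Both facts are read off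
from a Schreier graph: a vertex `none` with an `a`-loop, joined in both directions by `b`-edges to
the origin of a line on which `a` is the shift and `b` fixes every other point. The family is the
Schreier basis of the stabilizer of `none`, whereas `r` moves `none`. For `R`, take the subgroup
generated by `r` and basis elements other than `a` and `b`: killing `a` and all unused basis
elements sends `r` to `b`, so `R` is a retract in which `r` plays the role of `b`.
-/

namespace IsRetract

variable {G : Type*} [Group G]

theorem range_of_leftInverse {K : Type*} [Group K] {f : K →* G} {p : G →* K}
    (h : Function.LeftInverse p f) : IsRetract f.range := by
  refine ⟨f.comp p, ?_, ?_⟩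
  · rw [MonoidHom.range_comp, MonoidHom.range_eq_top.mpr h.surjective, ← MonoidHom.range_eq_map]
  · rintro _ ⟨w, rfl⟩
    simp [h w]

theorem exists_pow_eq {C : Subgroup G} [IsMulCommutative C] (hC : IsRetract C) {p : ℕ} {z c : G}
    (hc : c ∈ commutator G) (hmem : z ^ p * c ∈ C) : ∃ y ∈ C, y ^ p = z ^ p * c := by
  obtain ⟨ρ, rfl, hfix⟩ := hC
  have hmap : (commutator G).map ρ = ⊥ := by
    rw [commutator_def, Subgroup.map_commutator, ← MonoidHom.range_eq_map,
      Subgroup.commutator_self_eq_bot_iff]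
    infer_instance
  have hρc : ρ c = 1 := by
    simpa [hmap] using Subgroup.mem_map_of_mem ρ hc
  exact ⟨ρ z, ⟨z, rfl⟩, by rw [← hfix _ hmem, map_mul, map_pow, hρc, mul_one]⟩

theorem mem_of_pow_mem [IsMulTorsionFree G] {C H : Subgroup G} [IsMulCommutative C]
    (hC : IsRetract (C.subgroupOf H)) {p : ℕ} (hp : p ≠ 0) {r : G} (hr : r ^ p ∈ C) {z c : H}
    (hc : c ∈ commutator H) (hrz : r ^ p = z ^ p * c) : r ∈ C := by
  have hmem : z ^ p * c ∈ C.subgroupOf H := by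
    simpa [Subgroup.mem_subgroupOf, ← hrz] using hr
  obtain ⟨y, hy, hyp⟩ := hC.exists_pow_eq hc hmem
  have hyr : (y : G) ^ p = r ^ p := by
    rw [hrz]
    exact_mod_cast congrArg Subtype.val hyp
  exact pow_left_injective hp hyr ▸ Subgroup.mem_subgroupOf.mp hy

end IsRetract

namespace BergmanRetract

open FreeGroup
open scoped commutatorElement

theorem hasFreeRank_closure_image {ι G : Type*} [Group G] {s : ι → G}
    (hs : Function.Injective (lift s)) (S : Finset ι) :
    HasFreeRank (Subgroup.closure (s '' S)) S.card := by
  let e : Fin S.card → ι := fun i => S.equivFin.symm i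
  have he : Function.Injective e := Subtype.val_injective.comp S.equivFin.symm.injective
  have hrange : Set.range e = S :=
    (S.equivFin.symm.surjective.range_comp Subtype.val).trans Subtype.range_coe
  refine ⟨lift (s ∘ e), ?_, by rw [range_lift_eq_closure, Set.range_comp, hrange]⟩
  have hlift : lift (s ∘ e) = (lift s).comp (map e) := by
    ext i
    simp
  rw [hlift]
  exact hs.comp (map_injective he)

section FreeAction

variable {ι G P : Type*} [Group G] {s : ι → G} {f : G →* Equiv.Perm (P × FreeGroup ι)} {p₀ : P}

theorem lift_perm_apply (hs : ∀ i g, f (s i) (p₀, g) = (p₀, of i * g)) (w g : FreeGroup ι) :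
    f (lift s w) (p₀, g) = (p₀, w * g) := by
  induction w using FreeGroup.induction_on generalizing g with
  | C1 => simp
  | of i => simp [hs]
  | inv_of i _ =>
    rw [_root_.map_inv, _root_.map_inv, Equiv.Perm.inv_eq_iff_eq, lift_apply_of, hs,
      mul_inv_cancel_left]
  | mul x y hx hy => rw [_root_.map_mul, _root_.map_mul, Equiv.Perm.mul_apply, hy, hx, mul_assoc]

theorem lift_injective_of_perm (hs : ∀ i g, f (s i) (p₀, g) = (p₀, of i * g)) :
    Function.Injective (lift s) := by
  intro v w hvw
  have h : (p₀, v * 1) = (p₀, w * 1) := by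
    rw [← lift_perm_apply hs, ← lift_perm_apply hs, hvw]
  simpa using h

theorem fst_perm_apply_of_mem_range (hs : ∀ i g, f (s i) (p₀, g) = (p₀, of i * g)) {h : G}
    (hh : h ∈ (lift s).range) (g : FreeGroup ι) : (f h (p₀, g)).1 = p₀ := by
  obtain ⟨w, rfl⟩ := hh
  rw [lift_perm_apply hs]

end FreeAction

section SchreierGraph

variable {G K : Type*} [Group G] [Group K]

/-- The Schreier basis of the stabilizer of `none` in the graph on `Option ℤ` where `a` fixes `none`
and shifts `ℤ`, while `b` exchanges `none` with `some 0` and fixes the other vertices. The basis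
element `none` is the `a`-loop at `none`; the basis element `some j` runs through the `b`-edge
leaving `some j`. Words act on the left, so they are read from right to left. -/
def schreierGen (a b : G) : Option ℤ → G
  | none => a
  | some j => if j = 0 then b ^ 2 else b⁻¹ * (a ^ j)⁻¹ * b * a ^ j * b

/-- The element whose square, but not itself, lies in the subgroup generated by the `schreierGen`.
Together with further basis elements it generates the retract of the counterexample. -/
def root (a b : G) : G := b⁻¹ * a⁻¹ * b ^ 2 * a

theorem map_schreierGen (f : G →* K) (a b : G) (i : Option ℤ) :
    f (schreierGen a b i) = schreierGen (f a) (f b) i := by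
  rcases i with _ | j
  · rfl
  · by_cases hj : j = 0 <;> simp [schreierGen, hj]

theorem map_root (f : G →* K) (a b : G) : f (root a b) = root (f a) (f b) := by
  simp [root]

theorem root_sq (a b : G) :
    root a b ^ 2 = schreierGen a b (some 1) ^ 2 *
      ⁅(schreierGen a b (some 0))⁻¹, (schreierGen a b none)⁻¹⁆ := by
  simp [root, schreierGen, commutatorElement_def, pow_two, mul_assoc]

/-- The action of `a` on the covering of the Schreier graph with fibre `G`, where the `a`-loop at
`none` carries the label `c none` and all other `a`-edges carry the label `1`. -/
def shiftPerm (c : Option ℤ → G) : Equiv.Perm (Option ℤ × G) :=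
  (Equiv.addRight (1 : ℤ)).optionCongr.prodShear
    fun v => v.elim (Equiv.mulLeft (c none)) fun _ => Equiv.refl G

/-- The action of `b` on the covering of the Schreier graph with fibre `G`, where the `b`-edge
leaving `some j` carries the label `c (some j)` and the one leaving `none` carries the label `1`. -/
def swapPerm (c : Option ℤ → G) : Equiv.Perm (Option ℤ × G) :=
  (Equiv.swap none (some 0)).prodShear
    fun v => v.elim (Equiv.refl G) fun j => Equiv.mulLeft (c (some j))

variable (c : Option ℤ → G) (g : G)

theorem shiftPerm_none : shiftPerm c (none, g) = (none, c none * g) := rfl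

theorem shiftPerm_some (j : ℤ) : shiftPerm c (some j, g) = (some (j + 1), g) := rfl

theorem swapPerm_none : swapPerm c (none, g) = (some 0, g) := by
  simp [swapPerm]

theorem swapPerm_zero : swapPerm c (some 0, g) = (none, c (some 0) * g) := by
  simp [swapPerm]

theorem swapPerm_some {j : ℤ} (hj : j ≠ 0) :
    swapPerm c (some j, g) = (some j, c (some j) * g) := by
  simp [swapPerm, Equiv.swap_apply_of_ne_of_ne, hj]

theorem shiftPerm_zpow_some (i j : ℤ) : (shiftPerm c ^ i) (some j, g) = (some (j + i), g) := by
  induction i with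
  | zero => simp
  | succ i ih => rw [add_comm, zpow_one_add, Equiv.Perm.mul_apply, ih, shiftPerm_some]; ring_nf
  | pred i ih =>
    rw [sub_eq_neg_add, zpow_add, zpow_neg_one, Equiv.Perm.mul_apply, ih, Equiv.Perm.inv_eq_iff_eq,
      shiftPerm_some]
    ring_nf

theorem schreierGen_perm_none (i : Option ℤ) :
    schreierGen (shiftPerm c) (swapPerm c) i (none, g) = (none, c i * g) := by
  rcases i with _ | j
  · exact shiftPerm_none c g
  by_cases hj : j = 0
  · simp [schreierGen, hj, pow_two, swapPerm_none, swapPerm_zero]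
  · simp only [schreierGen, if_neg hj, Equiv.Perm.mul_apply]
    rw [swapPerm_none, shiftPerm_zpow_some, zero_add, swapPerm_some c g hj,
      Equiv.Perm.inv_eq_iff_eq, Equiv.Perm.inv_eq_iff_eq, swapPerm_none, shiftPerm_zpow_some,
      zero_add]

theorem root_perm_none :
    root (shiftPerm c) (swapPerm c) (none, g) =
      (some 0, ⁅(c (some 0))⁻¹, (c none)⁻¹⁆ * g) := by
  simp only [root, pow_two, Equiv.Perm.mul_apply]
  rw [shiftPerm_none, swapPerm_none, swapPerm_zero, Equiv.Perm.inv_eq_iff_eq,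
    Equiv.Perm.inv_eq_iff_eq, swapPerm_zero, shiftPerm_none]
  simp [commutatorElement_def, mul_assoc]

end SchreierGraph

section RetractOfFreeGroup

variable {α β : Type*}

open scoped Classical in
/-- The homomorphism sending the basis elements `x` and `y` to `g` and `h` (for `x ≠ y`), and all
other basis elements to `1`. -/
noncomputable def pairHom {G : Type*} [Group G] (x y : α) (g h : G) : FreeGroup α →* G :=
  lift fun i => if i = x then g else if i = y then h else 1

section PairHom

variable {G : Type*} [Group G] {x y : α} (g h : G)

theorem pairHom_left : pairHom x y g h (of x) = g := by
  simp [pairHom]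

theorem pairHom_right (hxy : x ≠ y) : pairHom x y g h (of y) = h := by
  simp [pairHom, hxy.symm]

theorem pairHom_of_ne {i : α} (hx : i ≠ x) (hy : i ≠ y) : pairHom x y g h (of i) = 1 := by
  simp [pairHom, hx, hy]

end PairHom

section Pair

variable {x y : α}

theorem pairHom_schreierGen_perm_none (hxy : x ≠ y) (i : Option ℤ) (g : FreeGroup (Option ℤ)) :
    pairHom x y (shiftPerm of) (swapPerm of) (schreierGen (of x) (of y) i) (none, g) =
      (none, of i * g) := by
  rw [map_schreierGen, pairHom_left, pairHom_right _ _ hxy, schreierGen_perm_none]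

theorem lift_schreierGen_injective (hxy : x ≠ y) :
    Function.Injective (lift (schreierGen (of x) (of y))) :=
  lift_injective_of_perm (pairHom_schreierGen_perm_none hxy)

theorem root_notMem_range_lift_schreierGen (hxy : x ≠ y) :
    root (of x) (of y) ∉ (lift (schreierGen (of x) (of y))).range := by
  intro h
  have hfst := fst_perm_apply_of_mem_range (pairHom_schreierGen_perm_none hxy) h 1
  rw [map_root, pairHom_left, pairHom_right _ _ hxy, root_perm_none] at hfst
  exact Option.some_ne_none _ hfst

theorem pairHom_eq_self_of_mem_range (hxy : x ≠ y) {h : FreeGroup α}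
    (hh : h ∈ (lift (schreierGen (of x) (of y))).range) : pairHom x y (of x) (of y) h = h := by
  obtain ⟨w, rfl⟩ := hh
  have hcomp : (pairHom x y (of x) (of y)).comp (lift (schreierGen (of x) (of y))) =
      lift (schreierGen (of x) (of y)) := by
    ext i
    simp [map_schreierGen, pairHom_left, pairHom_right _ _ hxy]
  exact DFunLike.congr_fun hcomp w

end Pair

section RootHom

variable {x : α} {j : β → α} {i₀ : β}

open scoped Classical in
/-- The embedding of free groups induced by `j` on bases, except that the basis element `i₀` is sent
to the `root` of `x` and `j i₀`. Its range is the retract of the counterexample. -/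
noncomputable def rootHom (x : α) (j : β → α) (i₀ : β) : FreeGroup β →* FreeGroup α :=
  lift (Function.update (of ∘ j) i₀ (root (of x) (of (j i₀))))

theorem rootHom_of_self : rootHom x j i₀ (of i₀) = root (of x) (of (j i₀)) := by
  simp [rootHom]

theorem rootHom_of_ne {i : β} (hi : i ≠ i₀) : rootHom x j i₀ (of i) = of (j i) := by
  simp [rootHom, hi]

theorem leftInverse_rootHom (hj : Function.Injective j) (hx : x ∉ Set.range j) :
    Function.LeftInverse (lift (Function.extend j of 1)) (rootHom x j i₀) := by
  have hcomp : (lift (Function.extend j of 1)).comp (rootHom x j i₀) = MonoidHom.id _ := by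
    ext i
    by_cases hi : i = i₀
    · subst hi
      simp [rootHom_of_self, hj.extend_apply, Function.extend_apply' _ _ _ hx, root, sq]
    · simp [rootHom_of_ne hi, hj.extend_apply]
  exact DFunLike.congr_fun hcomp

theorem pairHom_rootHom_mem_zpowers (hj : Function.Injective j) (hx : x ∉ Set.range j)
    (w : FreeGroup β) :
    pairHom x (j i₀) (of x) (of (j i₀)) (rootHom x j i₀ w) ∈
      Subgroup.zpowers (root (of x) (of (j i₀))) := by
  have hne (i : β) : j i ≠ x := fun h => hx ⟨i, h⟩
  induction w using FreeGroup.induction_on with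
  | C1 => simp
  | of i =>
    by_cases hi : i = i₀
    · simp [hi, rootHom_of_self, map_root, pairHom_left, pairHom_right _ _ (hne i₀).symm]
    · simp [rootHom_of_ne hi, pairHom_of_ne _ _ (hne i) (hj.ne hi)]
  | inv_of i h => simpa using h
  | mul v w hv hw => simpa using mul_mem hv hw

theorem inf_range_rootHom_le_zpowers (hj : Function.Injective j) (hx : x ∉ Set.range j) :
    (lift (schreierGen (of x) (of (j i₀)))).range ⊓ (rootHom x j i₀).range ≤
      Subgroup.zpowers (root (of x) (of (j i₀))) := by
  rintro h ⟨hh, w, rfl⟩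
  have hxy : x ≠ j i₀ := fun h => hx ⟨i₀, h.symm⟩
  exact pairHom_eq_self_of_mem_range hxy hh ▸ pairHom_rootHom_mem_zpowers hj hx w

end RootHom

end RetractOfFreeGroup

theorem not_isRetract_inf {G : Type*} [Group G] [IsMulTorsionFree G] {a b : G} {H R : Subgroup G}
    (hgen : ∀ i ∈ ({none, some 0, some 1} : Finset (Option ℤ)), schreierGen a b i ∈ H)
    (hrH : root a b ∉ H) (hrR : root a b ∈ R) (hHR : H ⊓ R ≤ Subgroup.zpowers (root a b)) :
    ¬ IsRetract ((H ⊓ R).subgroupOf H) := by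
  intro hret
  let x : H := ⟨_, hgen none (by simp)⟩
  let y : H := ⟨_, hgen (some 0) (by simp)⟩
  let z : H := ⟨_, hgen (some 1) (by simp)⟩
  have hsq : root a b ^ 2 = (z ^ 2 : H) * (⁅y⁻¹, x⁻¹⁆ : H) := root_sq a b
  have hmem : root a b ^ 2 ∈ H ⊓ R := ⟨hsq ▸ mul_mem (z ^ 2).2 ⁅y⁻¹, x⁻¹⁆.2, pow_mem hrR 2⟩
  have hcomm : ⁅y⁻¹, x⁻¹⁆ ∈ commutator H :=
    Subgroup.commutator_mem_commutator (Subgroup.mem_top _) (Subgroup.mem_top _)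
  have : IsMulCommutative (H ⊓ R : Subgroup G) :=
    ⟨⟨fun u v => Subtype.ext (setLike_mul_comm (hHR u.2) (hHR v.2))⟩⟩
  exact hrH (hret.mem_of_pow_mem two_ne_zero hmem hcomm hsq).1

end BergmanRetract

open BergmanRetract in
theorem bergman_negative_answer_general {α : Type*} {m k : ℕ} (hm : 3 ≤ m) (hk : 1 ≤ k)
    (hkα : k < ENat.card α) :
    ∃ H R : Subgroup (FreeGroup α), HasFreeRank H m ∧ IsRetract R ∧
      HasFreeRank R k ∧ ¬ IsRetract ((H ⊓ R).subgroupOf H) := by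
  obtain ⟨x⟩ : Nonempty α := (ENat.card_pos_iff_nonempty α).mp (bot_le.trans_lt hkα)
  obtain ⟨j, hj⟩ : ∃ j : Fin k ↪ α, Disjoint {x} (Set.range j) :=
    Fin.Embedding.exists_embedding_disjoint_range_of_add_le_ENat_card
      (by simpa [add_comm] using Order.add_one_le_of_lt hkα)
  have hx : x ∉ Set.range j := Set.disjoint_singleton_left.mp hj
  let i₀ : Fin k := ⟨0, hk⟩
  have hxy : x ≠ j i₀ := fun h => hx ⟨i₀, h.symm⟩
  let s := schreierGen (FreeGroup.of x) (FreeGroup.of (j i₀))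
  obtain ⟨S, hS, rfl⟩ :=
    Infinite.exists_superset_card_eq {none, some 0, some (1 : ℤ)} m (by simpa using hm)
  have hle : Subgroup.closure (s '' S) ≤ (FreeGroup.lift s).range :=
    FreeGroup.range_lift_eq_closure (f := s) ▸ Subgroup.closure_mono (Set.image_subset_range s S)
  have hinv := leftInverse_rootHom (i₀ := i₀) j.injective hx
  exact ⟨Subgroup.closure (s '' S), (rootHom x j i₀).range,
    hasFreeRank_closure_image (lift_schreierGen_injective hxy) S, .range_of_leftInverse hinv,
    ⟨_, hinv.injective, rfl⟩,
    not_isRetract_inf (fun i hi => Subgroup.subset_closure ⟨i, hS hi, rfl⟩)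
      (fun h => root_notMem_range_lift_schreierGen hxy (hle h)) ⟨_, rootHom_of_self⟩
      ((inf_le_inf_right _ hle).trans (inf_range_rootHom_le_zpowers j.injective hx))⟩

theorem bergman_negative_answer {n : ℕ} (hn : 2 ≤ n) (m : ℕ) (hm : 3 ≤ m)
    (k : ℕ) (hk1 : 1 ≤ k) (hk2 : k ≤ n - 1) :
    ∃ H R : Subgroup (FreeGroup (Fin n)), HasFreeRank H m ∧ IsRetract R ∧
      HasFreeRank R k ∧ ¬ IsRetract ((H ⊓ R).subgroupOf H) :=
  bergman_negative_answer_general hm hk1 (by simp; omega)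
end
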